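/- arXiv:2201.05360 — 9 statements merged into one kernel-verified Lean document; each statement's English description precedes it below -/
import Mathlib

section
/- Assume (A). Let u ∈ 𝒰_τ be such that x ↦ g(x,u(x)) is integrable. Let s ≤ 0 and let S ⊆ Ω be measurable with meas(S) = τ, such that ṽ is integrable on S and Ω_{<s} ⊆ S ⊆ Ω_{≤s}. Then ∫_Ω (g(x,u(x)) − g(x,0)) dx ≥ ∫_S ṽ(x) dx. Moreover, this inequality holds with equality only if all of the following are satisfied: (i) g(x,u(x)) − g(x,0) = ṽ(x) for almost all x ∈ supp u; (ii) up to sets of measure zero, Ω_{<s} ⊆ supp u ⊆ Ω_{≤s}; (iii) s = 0 or meas(supp u) = τ. -/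
open MeasureTheory Set Filter Topology ENNReal NNReal

noncomputable section

variable {d : ℕ}

/-- The Lebesgue measure on `ℝ^d` restricted to `Ω`. -/
def mOmega (Ω : Set (Fin d → ℝ)) : Measure (Fin d → ℝ) := volume.restrict Ω

/-- `|t|₀ = 1` if `t ≠ 0`, and `0` if `t = 0`. -/
def zeroInd (t : ℝ) : ℝ := if t = 0 then 0 else 1

/-- A Carathéodory function: measurable in `x` for every `u`, continuous in `u` for a.e. `x`. -/
def CaratheodoryFun (μ : Measure (Fin d → ℝ)) (h : (Fin d → ℝ) → ℝ → ℝ) : Prop :=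
  (∀ u : ℝ, Measurable fun x => h x u) ∧ ∀ᵐ x ∂μ, Continuous fun u => h x u

/-- A normal integrand with values in `ℝ ∪ {+∞}` (modeled inside `EReal`):
the pointwise supremum of countably many Carathéodory functions. -/
def NormalIntegrand (μ : Measure (Fin d → ℝ)) (g : (Fin d → ℝ) → ℝ → EReal) : Prop :=
  ∃ gn : ℕ → (Fin d → ℝ) → ℝ → ℝ,
    (∀ n, CaratheodoryFun μ (gn n)) ∧
      ∀ᵐ x ∂μ, ∀ u : ℝ, g x u = ⨆ n, ((gn n x u : ℝ) : EReal)

/-- An `EReal`-valued function is a.e. real-valued and integrable. -/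
def IntegrableE (μ : Measure (Fin d → ℝ)) (h : (Fin d → ℝ) → EReal) : Prop :=
  (∀ᵐ x ∂μ, h x ≠ ⊤ ∧ h x ≠ ⊥) ∧ Integrable (fun x => (h x).toReal) μ

/-- The integral of an (a.e. real-valued) `EReal`-valued function. -/
def intE (μ : Measure (Fin d → ℝ)) (h : (Fin d → ℝ) → EReal) : ℝ :=
  ∫ x, (h x).toReal ∂μ

/-- `ṽ(x) = inf_{v ∈ ℝ} g(x,v) − g(x,0)`. -/
def tildeV (g : (Fin d → ℝ) → ℝ → EReal) (x : Fin d → ℝ) : EReal :=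
  (⨅ v : ℝ, g x v) - g x 0

/-- The support of `u` inside `Ω`. -/
def suppIn (Ω : Set (Fin d → ℝ)) (u : (Fin d → ℝ) → ℝ) : Set (Fin d → ℝ) :=
  {x ∈ Ω | u x ≠ 0}

/-- `Ω_{<s} = {x ∈ Ω : ṽ(x) < s}`. -/
def OmLt (Ω : Set (Fin d → ℝ)) (g : (Fin d → ℝ) → ℝ → EReal) (s : ℝ) : Set (Fin d → ℝ) :=
  {x ∈ Ω | tildeV g x < (s : EReal)}

/-- `Ω_{≤s} = {x ∈ Ω : ṽ(x) ≤ s}`. -/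
def OmLe (Ω : Set (Fin d → ℝ)) (g : (Fin d → ℝ) → ℝ → EReal) (s : ℝ) : Set (Fin d → ℝ) :=
  {x ∈ Ω | tildeV g x ≤ (s : EReal)}

/-- Assumption (A): `g` is a normal integrand, `g(·,0)` is integrable, `τ ∈ (0, meas Ω)`. -/
structure AssumptionA (Ω : Set (Fin d → ℝ)) (g : (Fin d → ℝ) → ℝ → EReal) (τ : ℝ) : Prop where
  meas_Omega : MeasurableSet Ω
  normal : NormalIntegrand (mOmega Ω) g
  int_g0 : IntegrableE (mOmega Ω) fun x => g x 0
  tau_pos : 0 < τ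
  tau_lt : ENNReal.ofReal τ < volume Ω

/-- Feasible point of problem (P): measurable, `g(·,u)` integrable, `‖u‖₀ ≤ τ`. -/
def FeasibleP (Ω : Set (Fin d → ℝ)) (g : (Fin d → ℝ) → ℝ → EReal) (τ : ℝ)
    (u : (Fin d → ℝ) → ℝ) : Prop :=
  Measurable u ∧ IntegrableE (mOmega Ω) (fun x => g x (u x)) ∧
    volume (suppIn Ω u) ≤ ENNReal.ofReal τ

/-- `u` solves problem (P). -/
def SolvesP (Ω : Set (Fin d → ℝ)) (g : (Fin d → ℝ) → ℝ → EReal) (τ : ℝ)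
    (u : (Fin d → ℝ) → ℝ) : Prop :=
  FeasibleP Ω g τ u ∧ ∀ v, FeasibleP Ω g τ v →
    intE (mOmega Ω) (fun x => g x (u x)) ≤ intE (mOmega Ω) (fun x => g x (v x))

/-- The data from the characterization of solutions (Theorem `lem_char_sol_tau`):
`s ≤ 0` and a measurable `A ⊆ Ω` of measure `τ` with
`Ω_{<s} ⊆ supp u ⊆ A ⊆ Ω_{≤s}` up to null sets, `ṽ` integrable on `A`,
and `g(x,u(x)) − g(x,0) = ṽ(x)` a.e. on `A`. -/
structure CharData (Ω : Set (Fin d → ℝ)) (g : (Fin d → ℝ) → ℝ → EReal) (τ : ℝ)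
    (u : (Fin d → ℝ) → ℝ) (s : ℝ) (A : Set (Fin d → ℝ)) : Prop where
  s_nonpos : s ≤ 0
  A_meas : MeasurableSet A
  A_subset : A ⊆ Ω
  A_vol : volume A = ENNReal.ofReal τ
  lt_subset_supp : volume (OmLt Ω g s \ suppIn Ω u) = 0
  supp_subset_A : volume (suppIn Ω u \ A) = 0
  A_subset_le : volume (A \ OmLe Ω g s) = 0
  tv_int : IntegrableE ((mOmega Ω).restrict A) (tildeV g)
  eq_ae : ∀ᵐ x ∂(mOmega Ω).restrict A, g x (u x) - g x 0 = tildeV g x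

/-- Lemma `lem_basic_ineq`: under Assumption (A), if `u ∈ 𝒰_τ` with `g(·,u)`
integrable, `s ≤ 0`, and `S` is measurable with `meas S = τ`, `ṽ` integrable on `S` and
`Ω_{<s} ⊆ S ⊆ Ω_{≤s}`, then `∫_Ω (g(x,u(x)) − g(x,0)) dx ≥ ∫_S ṽ dx`, with equality only if
(i) `g(x,u(x)) − g(x,0) = ṽ(x)` a.e. on `supp u`, (ii) `Ω_{<s} ⊆ supp u ⊆ Ω_{≤s}` up to null
sets, (iii) `s = 0` or `meas (supp u) = τ`. -/
theorem statement1 (Ω : Set (Fin d → ℝ)) (g : (Fin d → ℝ) → ℝ → EReal) (τ : ℝ)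
    (hA : AssumptionA Ω g τ)
    (u : (Fin d → ℝ) → ℝ) (hu_meas : Measurable u)
    (hu_tau : volume (suppIn Ω u) ≤ ENNReal.ofReal τ)
    (hu_int : IntegrableE (mOmega Ω) fun x => g x (u x))
    (s : ℝ) (hs : s ≤ 0)
    (S : Set (Fin d → ℝ)) (hS_meas : MeasurableSet S)
    (hS_vol : volume S = ENNReal.ofReal τ)
    (htv_int : IntegrableE ((mOmega Ω).restrict S) (tildeV g))
    (h_lt : OmLt Ω g s ⊆ S) (h_le : S ⊆ OmLe Ω g s) :
    intE ((mOmega Ω).restrict S) (tildeV g) ≤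
        intE (mOmega Ω) (fun x => g x (u x) - g x 0) ∧
    (intE (mOmega Ω) (fun x => g x (u x) - g x 0) =
        intE ((mOmega Ω).restrict S) (tildeV g) →
      (∀ᵐ x ∂mOmega Ω, u x ≠ 0 → g x (u x) - g x 0 = tildeV g x) ∧
      (volume (OmLt Ω g s \ suppIn Ω u) = 0 ∧ volume (suppIn Ω u \ OmLe Ω g s) = 0) ∧
      (s = 0 ∨ volume (suppIn Ω u) = ENNReal.ofReal τ)) := by
  have hΩ := hA.meas_Omega
  have hSΩ : S ⊆ Ω := fun x hx => (h_le hx).1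
  have hAm : MeasurableSet (suppIn Ω u) :=
    hΩ.inter ((hu_meas (measurableSet_singleton (0 : ℝ))).compl)
  have hAΩ : suppIn Ω u ⊆ Ω := fun x hx => hx.1
  have hAfin : volume (suppIn Ω u) ≠ ∞ := ne_top_of_le_ne_top ENNReal.ofReal_ne_top hu_tau
  have hSfin : volume S ≠ ∞ := by rw [hS_vol]; exact ENNReal.ofReal_ne_top
  have hμA : mOmega Ω (suppIn Ω u) = volume (suppIn Ω u) := by
    rw [mOmega, Measure.restrict_apply hAm, inter_eq_left.2 hAΩ]
  have hμS : mOmega Ω S = volume S := by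
    rw [mOmega, Measure.restrict_apply hS_meas, inter_eq_left.2 hSΩ]
  set A := suppIn Ω u with hAdef
  set w : (Fin d → ℝ) → ℝ := fun x => (g x (u x) - g x 0).toReal with hw
  set v : (Fin d → ℝ) → ℝ := fun x => (tildeV g x).toReal with hv
  have hmemΩ : ∀ᵐ x ∂mOmega Ω, x ∈ Ω := ae_restrict_mem hΩ
  have hvfin : ∀ᵐ x ∂mOmega Ω, x ∈ S → tildeV g x ≠ ⊤ ∧ tildeV g x ≠ ⊥ :=
    (ae_restrict_iff' hS_meas).1 htv_int.1
  have hwint : Integrable w (mOmega Ω) := by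
    refine (hu_int.2.sub hA.int_g0.2).congr ?_
    filter_upwards [hu_int.1, hA.int_g0.1] with x h1 h2
    exact (EReal.toReal_sub h1.1 h1.2 h2.1 h2.2).symm
  have hvint : Integrable (S.indicator v) (mOmega Ω) :=
    (integrable_indicator_iff hS_meas).2 htv_int.2
  have hcA : Integrable (A.indicator fun _ => s) (mOmega Ω) :=
    (integrable_indicator_iff hAm).2 (integrableOn_const (by rw [hμA]; exact hAfin))
  have hcS : Integrable (S.indicator fun _ => s) (mOmega Ω) :=
    (integrable_indicator_iff hS_meas).2 (integrableOn_const (by rw [hμS]; exact hSfin))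
  -- pointwise facts
  have hpt : ∀ᵐ x ∂mOmega Ω, (x ∈ A ↔ u x ≠ 0) ∧ (x ∉ A → w x = 0) ∧
      (g x (u x) - g x 0 = ((w x : ℝ) : EReal)) ∧ tildeV g x ≤ ((w x : ℝ) : EReal) ∧
      (x ∈ S → tildeV g x = ((v x : ℝ) : EReal) ∧ v x ≤ s) ∧
      (x ∉ S → (s : EReal) ≤ tildeV g x) := by
    filter_upwards [hu_int.1, hA.int_g0.1, hmemΩ, hvfin] with x h1 h2 hx h3
    have hwx : g x (u x) - g x 0 = ((w x : ℝ) : EReal) := by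
      simp only [hw]
      rw [EReal.toReal_sub h1.1 h1.2 h2.1 h2.2, EReal.coe_sub, EReal.coe_toReal h1.1 h1.2,
        EReal.coe_toReal h2.1 h2.2]
    have hxA : x ∈ A ↔ u x ≠ 0 := ⟨fun h => h.2, fun h => ⟨hx, h⟩⟩
    refine ⟨hxA, ?_, hwx, ?_, ?_, ?_⟩
    · intro h
      have h0 : u x = 0 := by by_contra h'; exact h (hxA.2 h')
      simp only [hw, h0]
      rw [EReal.toReal_sub h2.1 h2.2 h2.1 h2.2, sub_self]
    · rw [← hwx]
      exact EReal.sub_le_sub (iInf_le _ _) le_rfl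
    · intro h
      have he : tildeV g x = ((v x : ℝ) : EReal) :=
        (EReal.coe_toReal (h3 h).1 (h3 h).2).symm
      refine ⟨he, ?_⟩
      have := (h_le h).2
      rw [he] at this
      exact EReal.coe_le_coe_iff.1 this
    · intro h
      by_contra h'
      exact h (h_lt ⟨hx, not_le.1 h'⟩)
  set F : (Fin d → ℝ) → ℝ := fun x => (w x - S.indicator v x) -
    (A.indicator (fun _ => s) x - S.indicator (fun _ => s) x) with hF
  have hFint : Integrable F (mOmega Ω) := (hwint.sub hvint).sub (hcA.sub hcS)
  have hF0 : ∀ᵐ x ∂mOmega Ω, 0 ≤ F x := by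
    filter_upwards [hpt] with x ⟨h1, h2, h3, h4, h5, h6⟩
    simp only [hF]
    by_cases hxS : x ∈ S
    · obtain ⟨h5a, h5b⟩ := h5 hxS
      rw [h5a, EReal.coe_le_coe_iff] at h4
      by_cases hxA : x ∈ A
      · simp [hxS, hxA]; linarith
      · simp [hxS, hxA, h2 hxA]; linarith
    · by_cases hxA : x ∈ A
      · have := EReal.coe_le_coe_iff.1 ((h6 hxS).trans h4)
        simp [hxS, hxA]; linarith
      · simp [hxS, hxA, h2 hxA]
  have hIF : ∫ x, F x ∂mOmega Ω = (∫ x, w x ∂mOmega Ω) - (∫ x in S, v x ∂mOmega Ω) -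
      (volume A).toReal * s + τ * s := by
    have e1 : ∫ x, F x ∂mOmega Ω = ((∫ x, w x ∂mOmega Ω) - ∫ x, S.indicator v x ∂mOmega Ω) -
      ((∫ x, A.indicator (fun _ => s) x ∂mOmega Ω) -
        ∫ x, S.indicator (fun _ => s) x ∂mOmega Ω) := by
      rw [← integral_sub hwint hvint, ← integral_sub hcA hcS]
      exact integral_sub (hwint.sub hvint) (hcA.sub hcS)
    rw [e1, integral_indicator hS_meas, integral_indicator hS_meas, integral_indicator hAm,
      setIntegral_const, setIntegral_const, measureReal_def, measureReal_def, hμA, hμS, hS_vol,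
      ENNReal.toReal_ofReal hA.tau_pos.le, smul_eq_mul, smul_eq_mul]
    ring
  have hAτ : (volume A).toReal ≤ τ := ENNReal.toReal_le_of_le_ofReal hA.tau_pos.le hu_tau
  have hIF0 : 0 ≤ ∫ x, F x ∂mOmega Ω := integral_nonneg_of_ae hF0
  have hprod : 0 ≤ (τ - (volume A).toReal) * (-s) :=
    mul_nonneg (by linarith) (by linarith)
  have hgoal1 : intE ((mOmega Ω).restrict S) (tildeV g) = ∫ x in S, v x ∂mOmega Ω := rfl
  have hgoal2 : intE (mOmega Ω) (fun x => g x (u x) - g x 0) = ∫ x, w x ∂mOmega Ω := rfl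
  rw [hgoal1, hgoal2]
  refine ⟨by nlinarith, fun heq => ?_⟩
  have hFz : ∫ x, F x ∂mOmega Ω = 0 := by nlinarith
  have hpz : (τ - (volume A).toReal) * (-s) = 0 := by nlinarith
  have hFae : ∀ᵐ x ∂mOmega Ω, F x = 0 := (integral_eq_zero_iff_of_nonneg_ae hF0 hFint).1 hFz
  have key : ∀ᵐ x ∂mOmega Ω, (x ∈ A → g x (u x) - g x 0 = tildeV g x) ∧
      (x ∉ A → (s : EReal) ≤ tildeV g x) ∧ (x ∈ A → tildeV g x ≤ s) := by
    filter_upwards [hpt, hFae] with x ⟨h1, h2, h3, h4, h5, h6⟩ hf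
    simp only [hF] at hf
    by_cases hxS : x ∈ S
    · obtain ⟨h5a, h5b⟩ := h5 hxS
      by_cases hxA : x ∈ A
      · simp [hxS, hxA] at hf
        refine ⟨fun _ => ?_, fun h => absurd hxA h, fun _ => ?_⟩
        · rw [h3, h5a]; congr 1; linarith
        · rw [h5a]; exact EReal.coe_le_coe_iff.2 h5b
      · simp [hxS, hxA, h2 hxA] at hf
        refine ⟨fun h => absurd h hxA, fun _ => ?_, fun h => absurd h hxA⟩
        rw [h5a]; exact EReal.coe_le_coe_iff.2 (by linarith)
    · by_cases hxA : x ∈ A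
      · simp [hxS, hxA] at hf
        have hws : w x = s := by linarith
        rw [hws] at h3 h4
        have he := le_antisymm h4 (h6 hxS)
        exact ⟨fun _ => by rw [h3, he], fun h => absurd hxA h, fun _ => h4⟩
      · exact ⟨fun h => absurd h hxA, fun _ => h6 hxS, fun h => absurd h hxA⟩
  have keyv : ∀ᵐ x ∂(volume : Measure (Fin d → ℝ)), x ∈ Ω →
      (x ∈ A → g x (u x) - g x 0 = tildeV g x) ∧
      (x ∉ A → (s : EReal) ≤ tildeV g x) ∧ (x ∈ A → tildeV g x ≤ s) :=
    (ae_restrict_iff' hΩ).1 key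
  refine ⟨?_, ⟨?_, ?_⟩, ?_⟩
  · filter_upwards [key, hpt] with x h1 h2 hx
    exact h1.1 (h2.1.2 hx)
  · refine measure_mono_null ?_ (ae_iff.1 keyv)
    rintro x ⟨⟨hx, hlt⟩, hxA⟩ h
    exact absurd ((h hx).2.1 hxA) (not_le.2 hlt)
  · refine measure_mono_null ?_ (ae_iff.1 keyv)
    rintro x ⟨hxA, hn⟩ h
    exact hn ⟨hxA.1, (h hxA.1).2.2 hxA⟩
  · rcases mul_eq_zero.1 hpz with h | h
    · right
      rw [← ENNReal.ofReal_toReal hAfin]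
      congr 1; linarith
    · left; linarith
end
end

section
/- Assume (A) for the two parameters τ and τ' with 0 < τ < τ' < meas(Ω), and suppose problem (P) has a solution u_τ for parameter τ and a solution u_{τ'} for parameter τ'. Define the value function V(σ) := inf{∫_Ω g(x,u(x)) dx : u measurable, x ↦ g(x,u(x)) integrable, ‖u‖₀ ≤ σ}. Let s ≤ 0 be a number associated to u_τ by the solution characterization, i.e., there is a measurable A ⊆ Ω with meas(A) = τ such that Ω_{<s} ⊆ supp u_τ ⊆ A ⊆ Ω_{≤s} up to null sets, ṽ is integrable on A, and g(x,u_τ(x)) − g(x,0) = ṽ(x) a.e. on A. Then 0 ≤ V(τ) − V(τ') ≤ |s| (τ' − τ). -/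
open MeasureTheory Set Filter Topology ENNReal NNReal

noncomputable section

variable {d : ℕ}

/-- The value function `V(σ)` of problem (P) with parameter `σ`. -/
def Vval (Ω : Set (Fin d → ℝ)) (g : (Fin d → ℝ) → ℝ → EReal) (σ : ℝ) : ℝ :=
  sInf {r : ℝ | ∃ u, FeasibleP Ω g σ u ∧ intE (mOmega Ω) (fun x => g x (u x)) = r}

/-- strong stability of the value function: if `0 < τ < τ' < meas Ω`,
problems (P) for `τ` and `τ'` have solutions, and `s ≤ 0` is associated with the solution
`u_τ` by the characterization, then `0 ≤ V(τ) − V(τ') ≤ |s| (τ' − τ)`. -/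
theorem statement4 (Ω : Set (Fin d → ℝ)) (g : (Fin d → ℝ) → ℝ → EReal) (τ τ' : ℝ)
    (hττ' : τ < τ')
    (hA : AssumptionA Ω g τ) (hA' : AssumptionA Ω g τ')
    (utau utau' : (Fin d → ℝ) → ℝ)
    (h_sol : SolvesP Ω g τ utau) (h_sol' : SolvesP Ω g τ' utau')
    (s : ℝ) (A : Set (Fin d → ℝ)) (h_char : CharData Ω g τ utau s A) :
    0 ≤ Vval Ω g τ - Vval Ω g τ' ∧ Vval Ω g τ - Vval Ω g τ' ≤ |s| * (τ' - τ) := by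
  have key : ∀ (σ : ℝ) (u : (Fin d → ℝ) → ℝ), SolvesP Ω g σ u →
      Vval Ω g σ = intE (mOmega Ω) (fun x => g x (u x)) := by
    intro σ u h
    apply IsLeast.csInf_eq
    refine ⟨⟨u, h.1, rfl⟩, ?_⟩
    rintro r ⟨v, hv, rfl⟩
    exact h.2 v hv
  rw [key τ utau h_sol, key τ' utau' h_sol']
  have hτ := hA.tau_pos
  constructor
  · rw [sub_nonneg]
    apply h_sol'.2
    exact ⟨h_sol.1.1, h_sol.1.2.1,
      h_sol.1.2.2.trans (ENNReal.ofReal_le_ofReal hττ'.le)⟩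
  obtain ⟨hs, hAm, hAO, hAv, h1, h2, h3, -, h5⟩ := h_char
  have hOm := hA.meas_Omega
  obtain ⟨⟨hm, ⟨hf, hi⟩, hv⟩, -⟩ := h_sol
  obtain ⟨⟨hm', ⟨hf', hi'⟩, hv'⟩, -⟩ := h_sol'
  obtain ⟨hg0, -⟩ := hA.int_g0
  set B := suppIn Ω utau' with hB
  have hBO : B ⊆ Ω := fun x hx => hx.1
  have hBm : MeasurableSet B := by
    have : B = Ω ∩ (utau' ⁻¹' {0})ᶜ := by
      ext x; simp [hB, suppIn]
    rw [this]
    exact hOm.inter (hm' (measurableSet_singleton 0)).compl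
  have hBf : volume B ≠ ⊤ := ne_top_of_le_ne_top ENNReal.ofReal_ne_top hv'
  have hAf : volume A ≠ ⊤ := by rw [hAv]; exact ENNReal.ofReal_ne_top
  rw [measure_eq_zero_iff_ae_notMem] at h1 h2 h3
  rw [ae_restrict_iff' hAm] at h5
  have hIA : Integrable (A.indicator fun _ => s) (mOmega Ω) := by
    rw [integrable_indicator_iff hAm]
    refine integrableOn_const ?_
    rw [mOmega, Measure.restrict_apply hAm, inter_eq_left.2 hAO]; exact hAf
  have hIB : Integrable (B.indicator fun _ => s) (mOmega Ω) := by
    rw [integrable_indicator_iff hBm]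
    refine integrableOn_const ?_
    rw [mOmega, Measure.restrict_apply hBm, inter_eq_left.2 hBO]; exact hBf
  have hpt : ∀ᵐ x ∂(mOmega Ω), (g x (utau x)).toReal - (g x (utau' x)).toReal
      ≤ A.indicator (fun _ => s) x - B.indicator (fun _ => s) x := by
    have hO : ∀ᵐ x ∂(mOmega Ω), x ∈ Ω := ae_restrict_mem hOm
    filter_upwards [hO, ae_restrict_of_ae h1, ae_restrict_of_ae h2, ae_restrict_of_ae h3,
      h5, hf, hf', hg0] with x hx h1 h2 h3 h5 hf hf' hg0
    have t1 : tildeV g x ≤ g x (utau' x) - g x 0 :=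
      EReal.sub_le_sub (iInf_le _ _) le_rfl
    have e1 := EReal.coe_toReal hf.1 hf.2
    have e2 := EReal.coe_toReal hf'.1 hf'.2
    have e3 := EReal.coe_toReal hg0.1 hg0.2
    have c3 : x ∈ A → tildeV g x ≤ (s : EReal) := fun h => by
      by_contra h'
      exact h3 ⟨h, fun h'' => h' h''.2⟩
    have c2 : x ∉ A → utau x = 0 := fun h => by
      by_contra h'
      exact h2 ⟨⟨hx, h'⟩, h⟩
    have c1 : utau x = 0 → (s : EReal) ≤ tildeV g x := fun h => by
      by_contra h'
      exact h1 ⟨⟨hx, not_le.1 h'⟩, fun h'' => h''.2 h⟩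
    have c4 : x ∉ B → utau' x = 0 := fun h => by
      by_contra h'
      exact h ⟨hx, h'⟩
    by_cases hxA : x ∈ A
    · have h5 := h5 hxA
      have c3 := c3 hxA
      rw [← h5] at t1 c3
      rw [← e1, ← e2, ← e3] at t1
      rw [← e1, ← e3] at c3
      norm_cast at t1 c3
      by_cases hxB : x ∈ B
      · simp only [indicator_of_mem hxA, indicator_of_mem hxB]
        linarith
      · simp only [indicator_of_mem hxA, indicator_of_notMem hxB, c4 hxB]
        linarith
    · have c2 := c2 hxA
      have c1 := (c1 c2).trans t1
      rw [← e2, ← e3] at c1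
      norm_cast at c1
      by_cases hxB : x ∈ B
      · simp only [indicator_of_notMem hxA, indicator_of_mem hxB, c2]
        linarith
      · simp only [indicator_of_notMem hxA, indicator_of_notMem hxB, c2, c4 hxB]
        linarith
  have hint := integral_mono_ae (hi.sub hi') (hIA.sub hIB) hpt
  simp only [Pi.sub_apply] at hint
  rw [integral_sub hi hi', integral_sub hIA hIB, integral_indicator_const _ hAm,
    integral_indicator_const _ hBm] at hint
  have mA : (mOmega Ω).real A = τ := by
    rw [Measure.real, mOmega, Measure.restrict_apply hAm, inter_eq_left.2 hAO, hAv,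
      ENNReal.toReal_ofReal hτ.le]
  have mB : (mOmega Ω).real B ≤ τ' := by
    rw [Measure.real, mOmega, Measure.restrict_apply hBm, inter_eq_left.2 hBO]
    exact ENNReal.toReal_le_of_le_ofReal (hτ.trans hττ').le hv'
  rw [mA, smul_eq_mul, smul_eq_mul] at hint
  rw [abs_of_nonpos hs]
  unfold intE
  nlinarith
end
end

section
/- Assume (A). Let u̅ be a solution of problem (P), and let s ≤ 0 be given by the solution characterization, i.e., there is a measurable A ⊆ Ω with meas(A) = τ such that Ω_{<s} ⊆ supp u̅ ⊆ A ⊆ Ω_{≤s} up to null sets, ṽ is integrable on A, and g(x,u̅(x)) − g(x,0) = ṽ(x) a.e. on A. Then s · (τ − ‖u̅‖₀) = 0. -/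
open MeasureTheory Set Filter Topology ENNReal NNReal

noncomputable section

variable {d : ℕ}

/-- Corollary `cor25`: under Assumption (A), if `u̅` solves (P) and `s ≤ 0`
comes from the solution characterization, then `s · (τ − ‖u̅‖₀) = 0`. -/
theorem statement5 (Ω : Set (Fin d → ℝ)) (g : (Fin d → ℝ) → ℝ → EReal) (τ : ℝ)
    (hA : AssumptionA Ω g τ)
    (ubar : (Fin d → ℝ) → ℝ) (h_sol : SolvesP Ω g τ ubar)
    (s : ℝ) (A : Set (Fin d → ℝ)) (h_char : CharData Ω g τ ubar s A) :
    s * (τ - (volume (suppIn Ω ubar)).toReal) = 0 := by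
  rcases h_char.s_nonpos.eq_or_lt with hs | hs
  · simp [hs]
  have hAm := h_char.A_meas
  have hres : (mOmega Ω).restrict A = volume.restrict A := by
    unfold mOmega
    rw [Measure.restrict_restrict hAm, inter_eq_left.mpr h_char.A_subset]
  have h1 := h_char.eq_ae
  rw [hres, ae_restrict_iff' hAm] at h1
  have h2 := hA.int_g0.1
  unfold mOmega at h2
  rw [ae_restrict_iff' hA.meas_Omega] at h2
  have h3 : ∀ᵐ x, x ∉ A \ OmLe Ω g s := measure_eq_zero_iff_ae_notMem.mp h_char.A_subset_le
  have h4 : ∀ᵐ x, x ∉ suppIn Ω ubar \ A :=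
    measure_eq_zero_iff_ae_notMem.mp h_char.supp_subset_A
  have hEq : suppIn Ω ubar =ᵐ[volume] A := by
    rw [eventuallyEq_set]
    filter_upwards [h1, h2, h3, h4] with x h1 h2 h3 h4
    constructor
    · intro hx
      by_contra hxA
      exact h4 ⟨hx, hxA⟩
    · intro hx
      have hxΩ := h_char.A_subset hx
      refine ⟨hxΩ, fun hu => ?_⟩
      have hle : x ∈ OmLe Ω g s := by
        by_contra hn
        exact h3 ⟨hx, hn⟩
      have h5 := h1 hx
      obtain ⟨ht, hb⟩ := h2 hxΩ
      rw [hu, EReal.sub_self ht hb] at h5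
      have h6 := hle.2
      rw [← h5] at h6
      have h7 : (0 : ℝ) ≤ s := by exact_mod_cast h6
      linarith
  rw [measure_congr hEq, h_char.A_vol, ENNReal.toReal_ofReal hA.tau_pos.le]
  simp
end
end

section
/- Assume (A). Let u̅ be a solution of problem (P), and let s ≤ 0 be given by the solution characterization, i.e., there is a measurable A ⊆ Ω with meas(A) = τ such that Ω_{<s} ⊆ supp u̅ ⊆ A ⊆ Ω_{≤s} up to null sets, ṽ is integrable on A, and g(x,u̅(x)) − g(x,0) = ṽ(x) a.e. on A. Set λ := −s ≥ 0. Then u̅ minimizes ∫_Ω (g(x,u(x)) + λ |u(x)|₀) dx over all measurable u : Ω → ℝ for which x ↦ g(x,u(x)) is integrable, and u̅ also minimizes ∫_Ω g(x,u(x)) dx + λ · max(‖u‖₀ − τ, 0) over all measurable u : Ω → ℝ for which x ↦ g(x,u(x)) is integrable. -/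
open MeasureTheory Set Filter Topology ENNReal NNReal

noncomputable section

variable {d : ℕ}

theorem aux_pointwise (G0 Gb Gu I : EReal) (s : ℝ) (hs : s ≤ 0) (ub u : ℝ)
    (h0 : G0 ≠ ⊤ ∧ G0 ≠ ⊥) (hb : Gb ≠ ⊤ ∧ Gb ≠ ⊥) (hu : Gu ≠ ⊤ ∧ Gu ≠ ⊥)
    (hI : I ≤ Gu) (hub : ub = 0 → Gb = G0) (hu0 : u = 0 → Gu = G0)
    (hcase : (Gb - G0 = I - G0 ∧ I - G0 ≤ (s : EReal)) ∨ (ub = 0 ∧ (s : EReal) ≤ I - G0)) :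
    Gb.toReal + (-s) * zeroInd ub ≤ Gu.toReal + (-s) * zeroInd u := by
  lift G0 to ℝ using h0
  lift Gb to ℝ using hb
  lift Gu to ℝ using hu
  simp only [EReal.toReal_coe, EReal.coe_eq_coe_iff] at *
  induction I with
  | bot =>
    exfalso
    rcases hcase with ⟨h, _⟩ | ⟨_, h⟩
    · rw [EReal.bot_sub, ← EReal.coe_sub] at h
      exact EReal.coe_ne_bot _ h
    · rw [EReal.bot_sub] at h
      exact EReal.coe_ne_bot _ (le_bot_iff.1 h)
  | top => exact absurd (top_le_iff.1 hI) (EReal.coe_ne_top _)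
  | coe I =>
    simp only [← EReal.coe_sub, EReal.coe_le_coe_iff, EReal.coe_eq_coe_iff] at *
    unfold zeroInd
    split_ifs with h1 h2 h2
    · rw [hub h1, hu0 h2]
    · have := hub h1
      rcases hcase with ⟨h, h'⟩ | ⟨h, h'⟩ <;> linarith
    · have := hu0 h2
      rcases hcase with ⟨h, h'⟩ | ⟨h, h'⟩
      · linarith
      · exact absurd h h1
    · rcases hcase with ⟨h, h'⟩ | ⟨h, h'⟩
      · linarith
      · exact absurd h h1

theorem aux_meas_supp (Ω : Set (Fin d → ℝ)) (hΩ : MeasurableSet Ω) (u : (Fin d → ℝ) → ℝ)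
    (hu : Measurable u) : MeasurableSet (suppIn Ω u) :=
  hΩ.inter (hu (measurableSet_singleton (0 : ℝ)).compl)

theorem aux_zeroInd (Ω : Set (Fin d → ℝ)) (hΩ : MeasurableSet Ω) (u : (Fin d → ℝ) → ℝ)
    (hu : Measurable u) (hfin : volume (suppIn Ω u) ≠ ⊤) :
    Integrable (fun x => zeroInd (u x)) (mOmega Ω) ∧
      ∫ x, zeroInd (u x) ∂(mOmega Ω) = (volume (suppIn Ω u)).toReal := by
  have hm := aux_meas_supp Ω hΩ u hu
  have hae : (fun x => zeroInd (u x)) =ᵐ[mOmega Ω] (suppIn Ω u).indicator (fun _ => (1 : ℝ)) := by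
    unfold mOmega
    filter_upwards [ae_restrict_mem hΩ] with x hx
    by_cases h : u x = 0 <;> simp [zeroInd, suppIn, Set.indicator, h, hx]
  have hv : mOmega Ω (suppIn Ω u) = volume (suppIn Ω u) := by
    unfold mOmega
    rw [Measure.restrict_apply hm]
    congr 1
    exact Set.inter_eq_left.2 fun x hx => hx.1
  constructor
  · refine (Integrable.congr ?_ hae.symm)
    rw [integrable_indicator_iff hm]
    exact integrableOn_const (by rw [hv]; exact hfin)
  · rw [integral_congr_ae hae, integral_indicator hm]
    simp [Measure.real, hv]

theorem aux_ae (Ω : Set (Fin d → ℝ)) (g : (Fin d → ℝ) → ℝ → EReal) (τ : ℝ)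
    (hA : AssumptionA Ω g τ)
    (ubar : (Fin d → ℝ) → ℝ) (h_sol : SolvesP Ω g τ ubar)
    (s : ℝ) (A : Set (Fin d → ℝ)) (h_char : CharData Ω g τ ubar s A)
    (u : (Fin d → ℝ) → ℝ)
    (hi : IntegrableE (mOmega Ω) (fun x => g x (u x))) :
    ∀ᵐ x ∂(mOmega Ω), (g x (ubar x)).toReal + (-s) * zeroInd (ubar x) ≤
      (g x (u x)).toReal + (-s) * zeroInd (u x) := by
  have n1 : ∀ᵐ x ∂(mOmega Ω), x ∉ OmLt Ω g s \ suppIn Ω ubar :=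
    ae_restrict_of_ae (measure_eq_zero_iff_ae_notMem.1 h_char.lt_subset_supp)
  have n2 : ∀ᵐ x ∂(mOmega Ω), x ∉ suppIn Ω ubar \ A :=
    ae_restrict_of_ae (measure_eq_zero_iff_ae_notMem.1 h_char.supp_subset_A)
  have n3 : ∀ᵐ x ∂(mOmega Ω), x ∉ A \ OmLe Ω g s :=
    ae_restrict_of_ae (measure_eq_zero_iff_ae_notMem.1 h_char.A_subset_le)
  have n4 := (ae_restrict_iff' h_char.A_meas).1 h_char.eq_ae
  have n5 : ∀ᵐ x ∂(mOmega Ω), x ∈ Ω := ae_restrict_mem hA.meas_Omega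
  filter_upwards [n1, n2, n3, n4, n5, hi.1, hA.int_g0.1, h_sol.1.2.1.1] with
    x h1 h2 h3 h4 h5 hu h0 hb
  refine aux_pointwise (g x 0) _ _ (⨅ v : ℝ, g x v) s h_char.s_nonpos _ _ h0 hb hu
    (iInf_le _ _) (fun h => by rw [h]) (fun h => by rw [h]) ?_
  by_cases hx : x ∈ A
  · left
    refine ⟨h4 hx, ?_⟩
    by_contra hc
    exact h3 ⟨hx, fun h => hc h.2⟩
  · right
    have hns : x ∉ suppIn Ω ubar := fun h => h2 ⟨h, hx⟩
    refine ⟨?_, ?_⟩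
    · by_contra hc
      exact hns ⟨h5, hc⟩
    · by_contra hc
      exact h1 ⟨⟨h5, not_le.1 hc⟩, hns⟩

theorem aux_full (Ω : Set (Fin d → ℝ)) (g : (Fin d → ℝ) → ℝ → EReal) (τ : ℝ)
    (hA : AssumptionA Ω g τ)
    (ubar : (Fin d → ℝ) → ℝ)
    (s : ℝ) (A : Set (Fin d → ℝ)) (h_char : CharData Ω g τ ubar s A) (hs : s < 0) :
    ENNReal.ofReal τ ≤ volume (suppIn Ω ubar) := by
  rw [← h_char.A_vol]
  apply measure_mono_ae
  have n3 := measure_eq_zero_iff_ae_notMem.1 h_char.A_subset_le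
  have n4 := (ae_restrict_iff' hA.meas_Omega).1
    ((ae_restrict_iff' h_char.A_meas).1 h_char.eq_ae)
  have n6 := (ae_restrict_iff' hA.meas_Omega).1 hA.int_g0.1
  filter_upwards [n3, n4, n6] with x h3 h4 h6 hx
  have hxΩ := h_char.A_subset hx
  refine ⟨hxΩ, fun h0 => h3 ⟨hx, fun hle => ?_⟩⟩
  have e := h4 hxΩ hx
  have hle' := hle.2
  rw [← e, h0, EReal.sub_self (h6 hxΩ).1 (h6 hxΩ).2] at hle'
  have : (0 : ℝ) ≤ s := by exact_mod_cast hle'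
  linarith

theorem aux_real (Ω : Set (Fin d → ℝ)) (g : (Fin d → ℝ) → ℝ → EReal) (τ : ℝ)
    (hA : AssumptionA Ω g τ)
    (ubar : (Fin d → ℝ) → ℝ) (h_sol : SolvesP Ω g τ ubar)
    (s : ℝ) (A : Set (Fin d → ℝ)) (h_char : CharData Ω g τ ubar s A)
    (u : (Fin d → ℝ) → ℝ) (hu : Measurable u)
    (hi : IntegrableE (mOmega Ω) (fun x => g x (u x)))
    (hfin : volume (suppIn Ω u) ≠ ⊤) :
    intE (mOmega Ω) (fun x => g x (ubar x)) + (-s) * (volume (suppIn Ω ubar)).toReal ≤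
      intE (mOmega Ω) (fun x => g x (u x)) + (-s) * (volume (suppIn Ω u)).toReal := by
  have hbfin : volume (suppIn Ω ubar) ≠ ⊤ := ne_top_of_le_ne_top ENNReal.ofReal_ne_top h_sol.1.2.2
  obtain ⟨i1, e1⟩ := aux_zeroInd Ω hA.meas_Omega u hu hfin
  obtain ⟨i2, e2⟩ := aux_zeroInd Ω hA.meas_Omega ubar h_sol.1.1 hbfin
  have := integral_mono_ae (h_sol.1.2.1.2.add (i2.const_mul (-s))) (hi.2.add (i1.const_mul (-s)))
    (aux_ae Ω g τ hA ubar h_sol s A h_char u hi)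
  rw [integral_add' h_sol.1.2.1.2 (i2.const_mul (-s)), integral_add' hi.2 (i1.const_mul (-s)),
    integral_const_mul, integral_const_mul, e1, e2] at this
  exact this

theorem aux_zero (Ω : Set (Fin d → ℝ)) (g : (Fin d → ℝ) → ℝ → EReal) (τ : ℝ)
    (hA : AssumptionA Ω g τ)
    (ubar : (Fin d → ℝ) → ℝ) (h_sol : SolvesP Ω g τ ubar)
    (A : Set (Fin d → ℝ)) (h_char : CharData Ω g τ ubar 0 A)
    (u : (Fin d → ℝ) → ℝ)
    (hi : IntegrableE (mOmega Ω) (fun x => g x (u x))) :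
    intE (mOmega Ω) (fun x => g x (ubar x)) ≤ intE (mOmega Ω) (fun x => g x (u x)) := by
  refine integral_mono_ae h_sol.1.2.1.2 hi.2 ?_
  filter_upwards [aux_ae Ω g τ hA ubar h_sol 0 A h_char u hi] with x hx
  simpa using hx

theorem aux_coe (a : ℝ≥0∞) (h : a ≠ ⊤) : (a : EReal) = ((a.toReal : ℝ) : EReal) := by
  lift a to ℝ≥0 using h
  rfl

/-- Corollary `cor_int_penalty`: under Assumption (A), if `u̅` solves (P),
`s ≤ 0` comes from the solution characterization, and `λ := −s ≥ 0`, then `u̅` minimizes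
`∫_Ω g(x,u(x)) dx + λ ‖u‖₀` and also `∫_Ω g(x,u(x)) dx + λ (‖u‖₀ − τ)⁺` over all measurable
`u` with `g(·,u)` integrable.  (The penalty terms are interpreted in `EReal`, since `‖u‖₀`
may be infinite.) -/
theorem statement6 (Ω : Set (Fin d → ℝ)) (g : (Fin d → ℝ) → ℝ → EReal) (τ : ℝ)
    (hA : AssumptionA Ω g τ)
    (ubar : (Fin d → ℝ) → ℝ) (h_sol : SolvesP Ω g τ ubar)
    (s : ℝ) (A : Set (Fin d → ℝ)) (h_char : CharData Ω g τ ubar s A) :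
    (∀ u : (Fin d → ℝ) → ℝ, Measurable u →
      IntegrableE (mOmega Ω) (fun x => g x (u x)) →
      ((intE (mOmega Ω) fun x => g x (ubar x) : ℝ) : EReal)
          + ((-s : ℝ) : EReal) * (volume (suppIn Ω ubar) : EReal) ≤
        ((intE (mOmega Ω) fun x => g x (u x) : ℝ) : EReal)
          + ((-s : ℝ) : EReal) * (volume (suppIn Ω u) : EReal)) ∧
    (∀ u : (Fin d → ℝ) → ℝ, Measurable u →
      IntegrableE (mOmega Ω) (fun x => g x (u x)) →
      ((intE (mOmega Ω) fun x => g x (ubar x) : ℝ) : EReal)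
          + ((-s : ℝ) : EReal) * ((volume (suppIn Ω ubar) - ENNReal.ofReal τ : ℝ≥0∞) : EReal) ≤
        ((intE (mOmega Ω) fun x => g x (u x) : ℝ) : EReal)
          + ((-s : ℝ) : EReal) * ((volume (suppIn Ω u) - ENNReal.ofReal τ : ℝ≥0∞) : EReal)) := by
  have hbfin : volume (suppIn Ω ubar) ≠ ⊤ := ne_top_of_le_ne_top ENNReal.ofReal_ne_top h_sol.1.2.2
  rcases h_char.s_nonpos.eq_or_lt with hs | hs
  · subst hs
    constructor <;> intro u _ hi <;>
      simpa using aux_zero Ω g τ hA ubar h_sol A h_char u hi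
  · have hpos : (0 : EReal) < ((-s : ℝ) : EReal) := by
      exact_mod_cast (neg_pos.2 hs)
    have hvol : volume (suppIn Ω ubar) = ENNReal.ofReal τ :=
      le_antisymm h_sol.1.2.2 (aux_full Ω g τ hA ubar s A h_char hs)
    constructor
    · intro u hu hi
      by_cases hfin : volume (suppIn Ω u) = ⊤
      · rw [hfin, EReal.coe_ennreal_top, EReal.mul_top_of_pos hpos, EReal.coe_add_top]
        exact le_top
      · rw [aux_coe _ hbfin, aux_coe _ hfin]
        exact_mod_cast aux_real Ω g τ hA ubar h_sol s A h_char u hu hi hfin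
    · intro u hu hi
      rw [hvol, tsub_self, EReal.coe_ennreal_zero, mul_zero, add_zero]
      by_cases hfin : volume (suppIn Ω u) = ⊤
      · rw [hfin, ENNReal.top_sub ENNReal.ofReal_ne_top, EReal.coe_ennreal_top,
          EReal.mul_top_of_pos hpos, EReal.coe_add_top]
        exact le_top
      · rcases le_total (volume (suppIn Ω u)) (ENNReal.ofReal τ) with hle | hle
        · rw [tsub_eq_zero_of_le hle, EReal.coe_ennreal_zero, mul_zero, add_zero]
          exact_mod_cast h_sol.2 u ⟨hu, hi, hle⟩
        · have := aux_real Ω g τ hA ubar h_sol s A h_char u hu hi hfin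
          rw [aux_coe _ (ne_top_of_le_ne_top hfin tsub_le_self),
            ENNReal.toReal_sub_of_le hle hfin]
          rw [hvol] at this
          norm_cast
          linarith
end
end

section
/- Assume (A). Let λ' ≥ 0 and let u̅ be a measurable function with ‖u̅‖₀ = τ and x ↦ g(x,u̅(x)) integrable which minimizes ∫_Ω (g(x,v(x)) + λ' |v(x)|₀) dx over all measurable v : Ω → ℝ for which x ↦ g(x,v(x)) is integrable. Then u̅ is a solution of problem (P). -/
open MeasureTheory Set Filter Topology ENNReal NNReal

noncomputable section

variable {d : ℕ}

/-- under Assumption (A), if `λ' ≥ 0` and `u̅` with `‖u̅‖₀ = τ` minimizes the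
penalized functional `∫_Ω g(x,v(x)) dx + λ' ‖v‖₀` over all measurable `v` with `g(·,v)`
integrable, then `u̅` solves (P). -/
theorem statement7 (Ω : Set (Fin d → ℝ)) (g : (Fin d → ℝ) → ℝ → EReal) (τ : ℝ)
    (hA : AssumptionA Ω g τ)
    (lam : ℝ) (hlam : 0 ≤ lam)
    (ubar : (Fin d → ℝ) → ℝ) (h_meas : Measurable ubar)
    (h_int : IntegrableE (mOmega Ω) fun x => g x (ubar x))
    (h_supp : volume (suppIn Ω ubar) = ENNReal.ofReal τ)
    (h_min : ∀ v : (Fin d → ℝ) → ℝ, Measurable v →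
      IntegrableE (mOmega Ω) (fun x => g x (v x)) →
      ((intE (mOmega Ω) fun x => g x (ubar x) : ℝ) : EReal)
          + ((lam : ℝ) : EReal) * (volume (suppIn Ω ubar) : EReal) ≤
        ((intE (mOmega Ω) fun x => g x (v x) : ℝ) : EReal)
          + ((lam : ℝ) : EReal) * (volume (suppIn Ω v) : EReal)) :
    SolvesP Ω g τ ubar := by
  refine ⟨⟨h_meas, h_int, h_supp.le⟩, ?_⟩
  rintro v ⟨hv, hvi, hvs⟩
  have h := h_min v hv hvi
  have hne : volume (suppIn Ω v) ≠ ⊤ := ne_top_of_le_ne_top ENNReal.ofReal_ne_top hvs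
  have hle : (volume (suppIn Ω v)).toReal ≤ τ :=
    ENNReal.toReal_le_of_le_ofReal hA.tau_pos.le hvs
  rw [h_supp, ← ENNReal.ofReal_toReal hne, EReal.coe_ennreal_ofReal, EReal.coe_ennreal_ofReal,
    max_eq_left hA.tau_pos.le, max_eq_left ENNReal.toReal_nonneg] at h
  have h2 := mul_le_mul_of_nonneg_left hle hlam
  norm_cast at h
  linarith
end
end

section
/- Let Ω ⊆ ℝ^d be Lebesgue measurable, let L > 0 and α ≥ 0 with L + α > 0, let λ_k, λ_{k+1} ≥ 0, and let u_k, u_{k+1} ∈ L²(Ω) be such that for j ∈ {k, k+1} and almost all x ∈ Ω: u_j(x) ≠ 0 implies |u_j(x)| ≥ √(2λ_j/(L+α)) (as holds for consecutive iterates of the proximal gradient algorithm with the multipliers λ_j from the subproblems). With χ_j(x) := |u_j(x)|₀, it holds ‖u_{k+1} − u_k‖²_{L²(Ω)} ≥ (2 min(λ_k, λ_{k+1})/(L+α)) ‖χ_{k+1} − χ_k‖_{L¹(Ω)}. -/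
open MeasureTheory Set Filter Topology ENNReal NNReal

noncomputable section

variable {d : ℕ}

/-- Assumption (B): `f` is bounded from below and Fréchet differentiable with gradient
`gradf` (the Riesz representative of the derivative), `gradf` is Lipschitz with constant
`Lf`, and `α ≥ 0`. -/
structure AssumptionB (Ω : Set (Fin d → ℝ))
    (f : Lp ℝ 2 (mOmega Ω) → ℝ) (gradf : Lp ℝ 2 (mOmega Ω) → Lp ℝ 2 (mOmega Ω))
    (Lf α : ℝ) : Prop where
  bdd_below : ∃ c : ℝ, ∀ u, c ≤ f u
  deriv : ∀ u, HasFDerivAt f (innerSL ℝ (gradf u)) u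
  lipschitz : ∀ u v, ‖gradf u - gradf v‖ ≤ Lf * ‖u - v‖
  alpha_nonneg : 0 ≤ α

/-- `u` solves the proximal-gradient subproblem `(S_k)` with data `u_k`: it is feasible for
the `L⁰` constraint and minimizes
`f(u_k) + ∫ ∇f(u_k)(u − u_k) + (L/2)‖u − u_k‖² + (α/2)‖u‖²` subject to `‖u‖₀ ≤ τ`. -/
def SolvesSub (Ω : Set (Fin d → ℝ))
    (f : Lp ℝ 2 (mOmega Ω) → ℝ) (gradf : Lp ℝ 2 (mOmega Ω) → Lp ℝ 2 (mOmega Ω))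
    (α L τ : ℝ) (uk u : Lp ℝ 2 (mOmega Ω)) : Prop :=
  mOmega Ω {x | u x ≠ 0} ≤ ENNReal.ofReal τ ∧
    ∀ v : Lp ℝ 2 (mOmega Ω), mOmega Ω {x | v x ≠ 0} ≤ ENNReal.ofReal τ →
      f uk + ∫ x, gradf uk x * (u x - uk x) ∂mOmega Ω
          + L / 2 * ‖u - uk‖ ^ 2 + α / 2 * ‖u‖ ^ 2 ≤
        f uk + ∫ x, gradf uk x * (v x - uk x) ∂mOmega Ω
          + L / 2 * ‖v - uk‖ ^ 2 + α / 2 * ‖v‖ ^ 2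

/-- if consecutive iterates satisfy the support lower bound
`|u_j(x)| ≥ √(2λ_j/(L+α))` a.e. on their supports, then with `χ_j = |u_j(·)|₀` it holds
`‖u_{k+1} − u_k‖²_{L²} ≥ (2 min(λ_k, λ_{k+1})/(L+α)) ‖χ_{k+1} − χ_k‖_{L¹}`
(stated in `ℝ≥0∞` to allow `Ω` of infinite measure). -/
theorem statement13 (Ω : Set (Fin d → ℝ)) (hΩ : MeasurableSet Ω)
    (L α : ℝ) (hL : 0 < L) (hα : 0 ≤ α) (hLα : 0 < L + α)
    (lamk lamk1 : ℝ) (hlamk : 0 ≤ lamk) (hlamk1 : 0 ≤ lamk1)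
    (u0 u1 : Lp ℝ 2 (mOmega Ω))
    (h0 : ∀ᵐ x ∂mOmega Ω, u0 x ≠ 0 → Real.sqrt (2 * lamk / (L + α)) ≤ |u0 x|)
    (h1 : ∀ᵐ x ∂mOmega Ω, u1 x ≠ 0 → Real.sqrt (2 * lamk1 / (L + α)) ≤ |u1 x|) :
    ENNReal.ofReal (2 * min lamk lamk1 / (L + α)) *
        ∫⁻ x, ENNReal.ofReal |zeroInd (u1 x) - zeroInd (u0 x)| ∂mOmega Ω ≤
      ENNReal.ofReal (‖u1 - u0‖ ^ 2) := by
  have hn : ENNReal.ofReal (‖u1 - u0‖ ^ 2) = ∫⁻ x, ‖(u1 - u0) x‖ₑ ^ 2 ∂mOmega Ω := by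
    rw [ENNReal.ofReal_pow (norm_nonneg _), ofReal_norm_eq_enorm, Lp.enorm_def]
    have := eLpNorm_nnreal_pow_eq_lintegral (μ := mOmega Ω) (f := (u1 - u0 : Lp ℝ 2 (mOmega Ω)))
      (p := 2) (by norm_num) 
    simpa using this
  rw [hn]
  refine (lintegral_const_mul_le _ _).trans (lintegral_mono_ae ?_)
  filter_upwards [h0, h1, Lp.coeFn_sub u1 u0] with x hx0 hx1 hx
  rw [hx, Pi.sub_apply, ← ofReal_norm_eq_enorm, ← ENNReal.ofReal_pow (norm_nonneg _),
    ← ENNReal.ofReal_mul (by positivity)]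
  apply ENNReal.ofReal_le_ofReal
  rw [Real.norm_eq_abs, sq_abs]
  have e0 : 2 * min lamk lamk1 / (L + α) ≤ 2 * lamk / (L + α) := by
    gcongr; exact min_le_left _ _
  have e1 : 2 * min lamk lamk1 / (L + α) ≤ 2 * lamk1 / (L + α) := by
    gcongr; exact min_le_right _ _
  unfold zeroInd
  by_cases a : u0 x = 0 <;> by_cases b : u1 x = 0
  · simp [a, b]
  · have h := (Real.sqrt_le_left (abs_nonneg _)).1 (hx1 b)
    rw [sq_abs] at h
    simpa [a, b] using e1.trans h
  · have h := (Real.sqrt_le_left (abs_nonneg _)).1 (hx0 a)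
    rw [sq_abs] at h
    simpa [a, b] using e0.trans h
  · simp [a, b]; positivity
end
end

section
/- Assume (B) and L > L_f. Let (u_k)_{k≥0} be a sequence generated by the proximal gradient algorithm, and for each k let λ_{k+1} ≥ 0 be the multiplier of the subproblem (S_k), satisfying λ_{k+1}(‖u_{k+1}‖₀ − τ) = 0 and, for a.e. x, u_{k+1}(x) ≠ 0 implies |u_{k+1}(x)| ≥ √(2λ_{k+1}/(L+α)). Suppose liminf_{k→∞} λ_k > 0. Then the sequence χ_k := |u_k(·)|₀ converges in L¹(Ω) to a characteristic function χ̄, and every weak sequential limit point u̅ of (u_k) in L²(Ω) satisfies ‖u̅‖₀ ≤ τ. -/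
open MeasureTheory Set Filter Topology ENNReal NNReal

noncomputable section

variable {d : ℕ}

open scoped symmDiff

lemma descent_aux {H : Type*} [NormedAddCommGroup H] [InnerProductSpace ℝ H]
    (f : H → ℝ) (g : H → H) (M : ℝ)
    (hd : ∀ u, HasFDerivAt f (innerSL ℝ (g u)) u)
    (hl : ∀ u v, ‖g u - g v‖ ≤ M * ‖u - v‖) (u d : H) :
    f (u + d) ≤ f u + inner ℝ (g u) d + M / 2 * ‖d‖ ^ 2 := by
  let p : ℝ → ℝ := fun t => f (u + t • d) - t * inner ℝ (g u) d - M / 2 * t ^ 2 * ‖d‖ ^ 2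
  have hp : ∀ t, HasDerivAt p
      (inner ℝ (g (u + t • d)) d - inner ℝ (g u) d - M * t * ‖d‖ ^ 2) t := by
    intro t
    have h1 : HasDerivAt (fun t : ℝ => u + t • d) d t := by
      simpa using ((hasDerivAt_id t).smul_const d).const_add u
    have h2 := (hd (u + t • d)).comp_hasDerivAt t h1
    have h3 := ((hasDerivAt_id t).mul_const (inner ℝ (g u) d))
    have h4 := (((hasDerivAt_id t).pow 2).const_mul (M / 2)).mul_const (‖d‖ ^ 2)
    have h5 := (h2.sub h3).sub h4
    refine h5.congr_deriv ?_
    simp only [innerSL_apply_apply, id, Nat.cast_ofNat, Nat.add_one_sub_one, pow_one]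
    ring
  have hanti : AntitoneOn p (Icc 0 1) := by
    apply antitoneOn_of_deriv_nonpos (convex_Icc 0 1)
    · exact fun t _ => (hp t).continuousAt.continuousWithinAt
    · exact fun t _ => (hp t).differentiableAt.differentiableWithinAt
    · intro t ht
      rw [interior_Icc] at ht
      rw [(hp t).deriv, ← inner_sub_left]
      have h1 := real_inner_le_norm (g (u + t • d) - g u) d
      have h2 := hl (u + t • d) u
      rw [add_sub_cancel_left, norm_smul, Real.norm_of_nonneg ht.1.le] at h2
      have h3 := mul_le_mul_of_nonneg_right h2 (norm_nonneg d)
      nlinarith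
  have h := hanti (left_mem_Icc.2 zero_le_one) (right_mem_Icc.2 zero_le_one) zero_le_one
  simp [p] at h
  linarith

lemma cheb_aux {X : Type*} [MeasurableSpace X] (μ : Measure X) [IsFiniteMeasure μ]
    (u v : Lp ℝ 2 μ) (s : ℝ) (hs : 0 ≤ s)
    (hu : ∀ᵐ x ∂μ, u x ≠ 0 → s ≤ |u x|) (hv : ∀ᵐ x ∂μ, v x ≠ 0 → s ≤ |v x|) :
    s ^ 2 * μ.real ({x | u x ≠ 0} ∆ {x | v x ≠ 0}) ≤ ‖v - u‖ ^ 2 := by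
  have hn : ‖v - u‖ ^ 2 = ∫ x, (v - u) x * (v - u) x ∂μ := by
    rw [← real_inner_self_eq_norm_sq, L2.inner_def]
    simp [sq]
  have hi : Integrable (fun x => (v - u) x * (v - u) x) μ := by
    simpa [sq] using L2.integrable_inner (𝕜 := ℝ) (v - u) (v - u)
  rw [hn]
  refine le_trans ?_ (mul_meas_ge_le_integral_of_nonneg
    (Eventually.of_forall fun x => mul_self_nonneg _) hi (s ^ 2))
  apply mul_le_mul_of_nonneg_left _ (sq_nonneg s)
  apply ENNReal.toReal_mono (measure_ne_top _ _)
  apply measure_mono_ae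
  filter_upwards [hu, hv, Lp.coeFn_sub v u] with x h1 h2 h3 hx
  change s ^ 2 ≤ (v - u) x * (v - u) x
  rw [h3, Pi.sub_apply, ← sq, ← sq_abs (v x - u x)]
  apply pow_le_pow_left₀ hs
  rcases hx with ⟨ha, hb⟩ | ⟨ha, hb⟩
  · have : v x = 0 := by simpa using hb
    rw [this, zero_sub, abs_neg]; exact h1 ha
  · have : u x = 0 := by simpa using hb
    rw [this, sub_zero]; exact h2 ha

lemma nonzero_aux {X : Type*} [MeasurableSpace X] (μ : Measure X) [IsFiniteMeasure μ]
    (h : μ univ ≠ 0) : ∃ w : Lp ℝ 2 μ, w ≠ 0 := by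
  refine ⟨indicatorConstLp 2 (μ := μ) MeasurableSet.univ (measure_ne_top _ _) (1 : ℝ), ?_⟩
  intro h0
  have h1 := congrArg norm h0
  rw [norm_indicatorConstLp (by simp) (by simp), norm_zero] at h1
  have hpos : 0 < μ.real univ := ENNReal.toReal_pos h (measure_ne_top _ _)
  have h2 : 0 < ‖(1 : ℝ)‖ * μ.real univ ^ (1 / (2 : ℝ≥0∞).toReal) := by
    rw [norm_one, one_mul]
    exact Real.rpow_pos_of_pos hpos _
  linarith

lemma change_aux {X : Type*} (S : ℕ → Set X) (x : X) (k j : ℕ) (hkj : k ≤ j)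
    (h : ¬ (x ∈ S k ↔ x ∈ S j)) : x ∈ ⋃ i, S (i + k) ∆ S (i + k + 1) := by
  by_contra hc
  apply h
  simp only [mem_iUnion, not_exists] at hc
  induction j, hkj using Nat.le_induction with
  | base => rfl
  | succ j hj ih =>
    have h1 : x ∈ S k ↔ x ∈ S j := by
      by_contra h'
      exact h' (ih h')
    have h2 := hc (j - k)
    rw [Nat.sub_add_cancel hj, mem_symmDiff] at h2
    tauto

/-- under Assumption (B) with `L > L_f`, if `(u_k)` are iterates of the
proximal gradient algorithm with multipliers `λ_k ≥ 0` satisfying the complementarity and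
support lower bound conditions, and `liminf λ_k > 0`, then `χ_k = |u_k(·)|₀` converges in
`L¹(Ω)` to a characteristic function `χ̄`, and every weak sequential limit point `u̅` of
`(u_k)` in `L²(Ω)` satisfies `‖u̅‖₀ ≤ τ`. -/
theorem statement14 (Ω : Set (Fin d → ℝ)) (hΩ : MeasurableSet Ω)
    (h_pos : 0 < volume Ω) (h_fin : volume Ω < ⊤)
    (τ : ℝ) (hτ : 0 < τ) (hτ' : ENNReal.ofReal τ < volume Ω)
    (f : Lp ℝ 2 (mOmega Ω) → ℝ) (gradf : Lp ℝ 2 (mOmega Ω) → Lp ℝ 2 (mOmega Ω))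
    (Lf α : ℝ) (hB : AssumptionB Ω f gradf Lf α)
    (L : ℝ) (hL : Lf < L)
    (u : ℕ → Lp ℝ 2 (mOmega Ω))
    (h_alg : ∀ k : ℕ, SolvesSub Ω f gradf α L τ (u k) (u (k + 1)))
    (lam : ℕ → ℝ) (h_lam_nonneg : ∀ k, 0 ≤ lam k)
    (h_comp : ∀ k : ℕ, lam (k + 1) * ((mOmega Ω {x | u (k + 1) x ≠ 0}).toReal - τ) = 0)
    (h_bound : ∀ k : ℕ, ∀ᵐ x ∂mOmega Ω,
      u (k + 1) x ≠ 0 → Real.sqrt (2 * lam (k + 1) / (L + α)) ≤ |u (k + 1) x|)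
    (h_liminf : ∃ c : ℝ, 0 < c ∧ ∀ᶠ k in atTop, c ≤ lam k) :
    (∃ chibar : (Fin d → ℝ) → ℝ,
      (∀ᵐ x ∂mOmega Ω, chibar x = 0 ∨ chibar x = 1) ∧
      Tendsto (fun k => ∫ x, |zeroInd (u k x) - chibar x| ∂mOmega Ω) atTop (𝓝 0)) ∧
    ∀ (ubar : Lp ℝ 2 (mOmega Ω)) (kn : ℕ → ℕ), StrictMono kn →
      (∀ φ : Lp ℝ 2 (mOmega Ω),
        Tendsto (fun n => ∫ x, u (kn n) x * φ x ∂mOmega Ω) atTop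
          (𝓝 (∫ x, ubar x * φ x ∂mOmega Ω))) →
      mOmega Ω {x | ubar x ≠ 0} ≤ ENNReal.ofReal τ := by
  have : IsFiniteMeasure (mOmega Ω) := ⟨by simpa [mOmega] using h_fin⟩
  obtain ⟨c, hc, hlam⟩ := h_liminf
  obtain ⟨m, hm⟩ := hB.bdd_below
  have hα := hB.alpha_nonneg
  -- `Lf ≥ 0`
  have hLf : 0 ≤ Lf := by
    obtain ⟨w, hne⟩ := nonzero_aux (mOmega Ω) (by simpa [mOmega] using h_pos.ne')
    have h1 := (norm_nonneg _).trans (hB.lipschitz w 0)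
    rw [sub_zero] at h1
    exact nonneg_of_mul_nonneg_left h1 (norm_pos_iff.2 hne)
  have hLα : 0 < L + α := by linarith
  set S : ℕ → Set (Fin d → ℝ) := fun k => {x | u k x ≠ 0} with hS
  have hSm : ∀ k, MeasurableSet (S k) := fun k =>
    ((Lp.stronglyMeasurable (u k)).measurable (measurableSet_singleton 0)).compl
  have hSτ : ∀ k, (mOmega Ω) (S (k + 1)) ≤ ENNReal.ofReal τ := fun k => (h_alg k).1
  -- descent
  have hint : ∀ a b e : Lp ℝ 2 (mOmega Ω), ∫ x, a x * (b x - e x) ∂mOmega Ω = inner ℝ a (b - e) := by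
    intro a b e
    rw [L2.inner_def]
    apply integral_congr_ae
    filter_upwards [Lp.coeFn_sub b e] with x hx
    rw [hx]
    simp [mul_comm]
  let F : Lp ℝ 2 (mOmega Ω) → ℝ := fun v => f v + α / 2 * ‖v‖ ^ 2
  have hdesc : ∀ k, (L - Lf) / 2 * ‖u (k + 2) - u (k + 1)‖ ^ 2 ≤ F (u (k + 1)) - F (u (k + 2)) := by
    intro k
    have h1 := (h_alg (k + 1)).2 (u (k + 1)) (hSτ k)
    rw [hint, hint] at h1
    simp only [sub_self, inner_zero_right, norm_zero] at h1
    have h2 := descent_aux f gradf Lf hB.deriv hB.lipschitz (u (k + 1)) (u (k + 2) - u (k + 1))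
    rw [add_sub_cancel] at h2
    simp only [F]
    norm_num [add_assoc] at h1 h2 ⊢
    linarith
  have hsum : Summable (fun k => ‖u (k + 1) - u k‖ ^ 2) := by
    rw [← _root_.summable_nat_add_iff 1]
    apply summable_of_sum_range_le (c := (F (u 1) - m) / ((L - Lf) / 2))
    · intro n; positivity
    · intro n
      rw [le_div_iff₀ (by linarith), mul_comm, Finset.mul_sum]
      calc _ ≤ ∑ i ∈ Finset.range n, (F (u (i + 1)) - F (u (i + 1 + 1))) :=
            Finset.sum_le_sum fun i _ => hdesc i
        _ = F (u 1) - F (u (n + 1)) :=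
            Finset.sum_range_sub' (fun i => F (u (i + 1))) n
        _ ≤ _ := by
            have := hm (u (n + 1))
            have : 0 ≤ α / 2 * ‖u (n + 1)‖ ^ 2 := by positivity
            simp only [F] at *
            linarith
  set s := Real.sqrt (2 * c / (L + α)) with hs
  have hs0 : 0 < s := Real.sqrt_pos.2 (by positivity)
  have hlow : ∀ᶠ k in atTop, ∀ᵐ x ∂mOmega Ω, u k x ≠ 0 → s ≤ |u k x| := by
    filter_upwards [hlam, eventually_ge_atTop 1] with k hk hk1
    obtain ⟨j, rfl⟩ := Nat.exists_eq_add_of_le' hk1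
    filter_upwards [h_bound j] with x hx hne
    refine le_trans (Real.sqrt_le_sqrt ?_) (hx hne)
    gcongr
  have hsumr : Summable (fun k => (mOmega Ω).real (S k ∆ S (k + 1))) := by
    refine Summable.of_norm_bounded_eventually_nat (hsum.mul_left (1 / s ^ 2)) ?_
    filter_upwards [hlow, (tendsto_add_atTop_nat 1).eventually hlow] with k h1 h2
    rw [Real.norm_of_nonneg measureReal_nonneg, one_div, ← div_eq_inv_mul,
      le_div_iff₀ (by positivity), mul_comm]
    exact cheb_aux (mOmega Ω) (u k) (u (k + 1)) s hs0.le h1 h2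
  have htop : ∑' k, (mOmega Ω) (S k ∆ S (k + 1)) ≠ ⊤ := by
    have := hsumr.tsum_ofReal_ne_top
    simpa [Measure.real, ENNReal.ofReal_toReal (measure_ne_top _ _)] using this
  let D : ℕ → Set (Fin d → ℝ) := fun k => ⋃ i, S (i + k) ∆ S (i + k + 1)
  have hDt : Tendsto (fun k => (mOmega Ω) (D k)) atTop (𝓝 0) :=
    tendsto_of_tendsto_of_tendsto_of_le_of_le tendsto_const_nhds
      (ENNReal.tendsto_sum_nat_add (fun k => (mOmega Ω) (S k ∆ S (k + 1))) htop)
      (fun _ => zero_le) (fun k => measure_iUnion_le _)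
  let A : Set (Fin d → ℝ) := {x | ∃ᶠ k in atTop, x ∈ S k}
  have hAD : ∀ k, S k ∆ A ⊆ D k := by
    intro k x hx
    rcases hx with ⟨h1, h2⟩ | ⟨h1, h2⟩
    · obtain ⟨j, hj, hj'⟩ := ((not_frequently.1 h2).and (eventually_ge_atTop k)).exists
      exact change_aux S x k j hj' (by tauto)
    · obtain ⟨j, hj, hj'⟩ := (Frequently.and_eventually h1 (eventually_ge_atTop k)).exists
      exact change_aux S x k j hj' (by tauto)
  refine ⟨⟨A.indicator 1, ?_, ?_⟩, ?_⟩
  · refine Eventually.of_forall fun x => ?_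
    by_cases hx : x ∈ A <;> simp [hx]
  · have hDr : Tendsto (fun k => (mOmega Ω).real (D k)) atTop (𝓝 0) := by
      exact (ENNReal.tendsto_toReal ENNReal.zero_ne_top).comp hDt
    have hDm : ∀ k, MeasurableSet (D k) := fun k =>
      MeasurableSet.iUnion fun i => (hSm _).symmDiff (hSm _)
    refine squeeze_zero (fun k => integral_nonneg fun x => abs_nonneg _) (fun k => ?_) hDr
    rw [← integral_indicator_one (hDm k)]
    refine integral_mono_of_nonneg (Eventually.of_forall fun x => abs_nonneg _)
      ((integrable_const (1 : ℝ)).indicator (hDm k)) (Eventually.of_forall fun x => ?_)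
    have key := @hAD k x
    rw [mem_symmDiff] at key
    have hSx : x ∈ S k ↔ u k x ≠ 0 := Iff.rfl
    have hD0 : (0 : ℝ) ≤ (D k).indicator 1 x := indicator_nonneg (fun _ _ => zero_le_one) x
    by_cases h1 : u k x = 0 <;> by_cases h2 : x ∈ A
    · have : x ∈ D k := key (by tauto)
      simp [zeroInd, h1, h2, this]
    · simpa [zeroInd, h1, h2] using hD0
    · simpa [zeroInd, h1, h2] using hD0
    · have : x ∈ D k := key (by tauto)
      simp [zeroInd, h1, h2, this]
  · intro ubar kn hkn hw
    have hbd : ∀ k, (mOmega Ω) {x | ubar x ≠ 0} ≤ ENNReal.ofReal τ + (mOmega Ω) (D (k + 1)) := by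
      intro k
      let B : Set (Fin d → ℝ) := S (k + 1) ∪ D (k + 1)
      have hBm : MeasurableSet B :=
        (hSm _).union (MeasurableSet.iUnion fun i => (hSm _).symmDiff (hSm _))
      have hB0 : ∀ j, k + 1 ≤ j → ∀ x, x ∉ B → u j x = 0 := by
        intro j hj x hx
        by_contra h
        apply hx
        by_cases h' : x ∈ S (k + 1)
        · exact Or.inl h'
        · exact Or.inr (change_aux S x (k + 1) j hj (by
            have : x ∈ S j := h
            tauto))
      have hmem : MemLp (Bᶜ.indicator ubar) 2 (mOmega Ω) := (Lp.memLp ubar).indicator hBm.compl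
      set w : Lp ℝ 2 (mOmega Ω) := hmem.toLp _ with hwdef
      have hcoe : w =ᵐ[mOmega Ω] Bᶜ.indicator ubar := hmem.coeFn_toLp
      have hlim := hw w
      have hz : ∀ᶠ n in atTop, ∫ x, u (kn n) x * w x ∂mOmega Ω = 0 := by
        filter_upwards [eventually_ge_atTop (k + 1)] with n hn
        apply integral_eq_zero_of_ae
        filter_upwards [hcoe] with x hx
        rw [hx]
        by_cases h : x ∈ B
        · simp [h]
        · simp [hB0 (kn n) (hn.trans (hkn.id_le n)) x h]
      have h0 : ∫ x, ubar x * w x ∂mOmega Ω = 0 :=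
        tendsto_nhds_unique hlim (tendsto_const_nhds.congr' (hz.mono fun n hn => hn.symm))
      have hi : Integrable (fun x => ubar x * w x) (mOmega Ω) := by
        simpa [mul_comm] using L2.integrable_inner (𝕜 := ℝ) ubar w
      have hae : (fun x => ubar x * w x) =ᵐ[(mOmega Ω)] 0 := by
        rw [← integral_eq_zero_iff_of_nonneg_ae _ hi]
        · exact h0
        · filter_upwards [hcoe] with x hx
          rw [hx]
          by_cases h : x ∈ B
          · simp [h]
          · simp [h, mul_self_nonneg]
      calc (mOmega Ω) {x | ubar x ≠ 0} ≤ (mOmega Ω) B := by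
            apply measure_mono_ae
            filter_upwards [hae, hcoe] with x h1 h2 h3
            by_contra h
            have h' : x ∉ B := h
            rw [h2] at h1
            simp [h'] at h1
            exact h3 h1
        _ ≤ (mOmega Ω) (S (k + 1)) + (mOmega Ω) (D (k + 1)) := measure_union_le _ _
        _ ≤ _ := by gcongr; exact hSτ k
    have hlim : Tendsto (fun k => ENNReal.ofReal τ + (mOmega Ω) (D (k + 1))) atTop
        (𝓝 (ENNReal.ofReal τ + 0)) :=
      tendsto_const_nhds.add (hDt.comp (tendsto_add_atTop_nat 1))
    rw [add_zero] at hlim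
    exact ge_of_tendsto' hlim hbd
end
end

section
/- Assume (B) with α > 0 and L > L_f, and assume in addition that ∇f : L²(Ω) → L²(Ω) is completely continuous, i.e., v_k ⇀ v weakly in L²(Ω) implies ∇f(v_k) → ∇f(v) strongly in L²(Ω). Let (u_k)_{k≥0} be a sequence generated by the proximal gradient algorithm with multipliers λ_{k+1} ≥ 0 of the subproblems (satisfying λ_{k+1}(‖u_{k+1}‖₀ − τ) = 0 and, for a.e. x, u_{k+1}(x) ≠ 0 implies |u_{k+1}(x)| ≥ √(2λ_{k+1}/(L+α))), and suppose liminf_{k→∞} λ_k > 0. Then whenever a subsequence satisfies u_{k_n} ⇀ u̅ weakly in L²(Ω), it in fact converges strongly, u_{k_n} → u̅ in L²(Ω); and for almost all x ∈ Ω, u̅(x) ≠ 0 implies u̅(x) = −(1/α) ∇f(u̅)(x). -/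
open MeasureTheory Set Filter Topology ENNReal NNReal

noncomputable section

variable {d : ℕ}

section Helpers

variable {X : Type*} [MeasurableSpace X] {μ : Measure X}

/-- Restriction of an `L²` function to a measurable set. -/
def restrL (S : Set X) (hS : MeasurableSet S) (g : Lp ℝ 2 μ) : Lp ℝ 2 μ :=
  ((Lp.memLp g).indicator hS).toLp _

lemma restrL_ae (S : Set X) (hS : MeasurableSet S) (g : Lp ℝ 2 μ) :
    ∀ᵐ x ∂μ, restrL S hS g x = S.indicator g x :=
  MemLp.coeFn_toLp _

lemma inner_eq (g h : Lp ℝ 2 μ) : inner ℝ g h = ∫ x, g x * h x ∂μ := by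
  rw [L2.inner_def]
  refine integral_congr_ae (Eventually.of_forall fun x => ?_)
  simp [mul_comm]

lemma norm_sq_eq (g : Lp ℝ 2 μ) : ‖g‖ ^ 2 = ∫ x, g x ^ 2 ∂μ := by
  rw [← real_inner_self_eq_norm_sq, inner_eq]
  simp only [sq]

lemma restrL_tendsto (S : ℕ → Set X) (hS : ∀ n, MeasurableSet (S n)) (A : Set X)
    (hA : MeasurableSet A) (g : Lp ℝ 2 μ)
    (h : ∀ᵐ x ∂μ, ∀ᶠ n in atTop, (x ∈ S n ↔ x ∈ A)) :
    Tendsto (fun n => ‖restrL (S n) (hS n) g - restrL A hA g‖) atTop (𝓝 0) := by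
  have key : Tendsto (fun n => ‖restrL (S n) (hS n) g - restrL A hA g‖ ^ 2) atTop (𝓝 0) := by
    simp only [norm_sq_eq]
    have h0 : (0 : ℝ) = ∫ _x : X, (0 : ℝ) ∂μ := by simp
    rw [h0]
    have hpt : ∀ n, ∀ᵐ x ∂μ, (restrL (S n) (hS n) g - restrL A hA g : Lp ℝ 2 μ) x
        = (S n).indicator g x - A.indicator g x := by
      intro n
      filter_upwards [restrL_ae (S n) (hS n) g, restrL_ae A hA g,
        Lp.coeFn_sub (restrL (S n) (hS n) g) (restrL A hA g)] with x h1 h2 h3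
      rw [h3, Pi.sub_apply, h1, h2]
    refine tendsto_integral_of_dominated_convergence (fun x => g x ^ 2) ?_ ?_ ?_ ?_
    · intro n
      exact ((Lp.stronglyMeasurable _).pow 2).aestronglyMeasurable
    · exact (Lp.memLp g).integrable_sq
    · intro n
      filter_upwards [hpt n] with x hx
      rw [hx]
      by_cases h1 : x ∈ S n <;> by_cases h2 : x ∈ A <;> simp [h1, h2, sq_nonneg]
    · filter_upwards [h, ae_all_iff.2 hpt] with x hx hp
      refine tendsto_const_nhds.congr' ?_
      filter_upwards [hx] with n hn
      rw [hp n]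
      by_cases h2 : x ∈ A
      · simp [h2, hn.2 h2]
      · have h3 : x ∉ S n := fun h => h2 (hn.1 h)
        simp [h2, h3]
  have := key.sqrt
  simpa using this

lemma ae_tendsto_of_summable (w : ℕ → Lp ℝ 2 μ) (h : Summable fun n => ‖w n‖ ^ 2) :
    ∀ᵐ x ∂μ, Tendsto (fun n => w n x ^ 2) atTop (𝓝 0) := by
  have h1 : ∀ n, ∫⁻ x, ENNReal.ofReal (w n x ^ 2) ∂μ = ENNReal.ofReal (‖w n‖ ^ 2) := by
    intro n
    rw [norm_sq_eq, ofReal_integral_eq_lintegral_ofReal (Lp.memLp _).integrable_sq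
      (Eventually.of_forall fun x => sq_nonneg _)]
  have hm : ∀ n, Measurable fun x => ENNReal.ofReal (w n x ^ 2) := fun n =>
    ((Lp.stronglyMeasurable (w n)).measurable.pow_const 2).ennreal_ofReal
  have h2 : ∫⁻ x, ∑' n, ENNReal.ofReal (w n x ^ 2) ∂μ ≠ ⊤ := by
    rw [lintegral_tsum fun n => (hm n).aemeasurable]
    simp only [h1]
    exact h.tsum_ofReal_ne_top
  filter_upwards [ae_lt_top (Measurable.ennreal_tsum hm) h2] with x hx
  have h3 := ENNReal.tendsto_atTop_zero_of_tsum_ne_top hx.ne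
  have h4 := (ENNReal.tendsto_toReal ENNReal.zero_ne_top).comp h3
  refine h4.congr fun n => ?_
  simp [sq_nonneg]

lemma summable_of_descent (F e : ℕ → ℝ) (c : ℝ) (hc : ∀ n, c ≤ F n) (he : ∀ n, 0 ≤ e n)
    (h : ∀ n, F (n + 1) + e n ≤ F n) : Summable e := by
  have key : ∀ n, ∑ i ∈ Finset.range n, e i ≤ F 0 - F n := by
    intro n
    induction n with
    | zero => simp
    | succ n ih =>
      rw [Finset.sum_range_succ]
      linarith [h n]
  exact summable_of_sum_range_le (c := F 0 - c) he fun n => by linarith [key n, hc n]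

lemma descent_ineq {E : Type*} [NormedAddCommGroup E] [InnerProductSpace ℝ E]
    (f : E → ℝ) (G : E → E) (K : ℝ) (hd : ∀ u, HasFDerivAt f (innerSL ℝ (G u)) u)
    (hl : ∀ u v, ‖G u - G v‖ ≤ K * ‖u - v‖) (u v : E) :
    f v ≤ f u + inner ℝ (G u) (v - u) + K / 2 * ‖v - u‖ ^ 2 := by
  set h := v - u with hh
  set φ : ℝ → ℝ := fun t => f (u + t • h) - t * inner ℝ (G u) h - K / 2 * ‖h‖ ^ 2 * t ^ 2 with hφ
  have hder : ∀ t, HasDerivAt φ (inner ℝ (G (u + t • h)) h - inner ℝ (G u) h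
      - K / 2 * ‖h‖ ^ 2 * (2 * t)) t := by
    intro t
    have h1 : HasDerivAt (fun t : ℝ => u + t • h) h t := by
      simpa using ((hasDerivAt_id t).smul_const h).const_add u
    have h2 := (hd (u + t • h)).comp_hasDerivAt t h1
    have h3 : HasDerivAt (fun t : ℝ => t * inner ℝ (G u) h) (inner ℝ (G u) h) t := by
      simpa using (hasDerivAt_id t).mul_const (inner ℝ (G u) h)
    have h4 : HasDerivAt (fun t : ℝ => K / 2 * ‖h‖ ^ 2 * t ^ 2) (K / 2 * ‖h‖ ^ 2 * (2 * t)) t := by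
      simpa using (hasDerivAt_pow 2 t).const_mul (K / 2 * ‖h‖ ^ 2)
    exact (h2.sub h3).sub h4
  have hanti : AntitoneOn φ (Icc 0 1) := by
    refine antitoneOn_of_deriv_nonpos (convex_Icc 0 1)
      (fun t _ => (hder t).continuousAt.continuousWithinAt)
      (fun t _ => (hder t).differentiableAt.differentiableWithinAt) ?_
    intro t ht
    rw [interior_Icc] at ht
    rw [(hder t).deriv, ← inner_sub_left]
    have h5 := real_inner_le_norm (G (u + t • h) - G u) h
    have h6 := hl (u + t • h) u
    rw [add_sub_cancel_left, norm_smul, Real.norm_eq_abs, abs_of_pos ht.1] at h6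
    have h7 := mul_le_mul_of_nonneg_right h6 (norm_nonneg h)
    nlinarith
  have h8 := hanti (left_mem_Icc.2 zero_le_one) (right_mem_Icc.2 zero_le_one) zero_le_one
  simp only [hφ] at h8
  have h9 : u + (1 : ℝ) • h = v := by simp [hh]
  rw [h9] at h8
  simp at h8
  linarith

/-- First-order form of the subproblem on the support. -/
lemma prox_formula (α L : ℝ) (hLα : 0 < L + α) (g uk w : Lp ℝ 2 μ)
    (S : Set X) (hS : MeasurableSet S) (hw : ∀ᵐ x ∂μ, w x ≠ 0 → x ∈ S)
    (hmin : ∀ v : Lp ℝ 2 μ, (∀ᵐ x ∂μ, v x ≠ 0 → x ∈ S) →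
      inner ℝ g (w - uk) + L / 2 * ‖w - uk‖ ^ 2 + α / 2 * ‖w‖ ^ 2 ≤
      inner ℝ g (v - uk) + L / 2 * ‖v - uk‖ ^ 2 + α / 2 * ‖v‖ ^ 2) :
    (L + α) • w = restrL S hS (L • uk - g) := by
  set b := L • uk - g with hb
  set z := (L + α)⁻¹ • restrL S hS b with hz
  have hzb : (L + α) • z = restrL S hS b := by
    rw [hz, smul_smul, mul_inv_cancel₀ hLα.ne', one_smul]
  have hzS : ∀ᵐ x ∂μ, z x ≠ 0 → x ∈ S := by
    filter_upwards [restrL_ae S hS b, Lp.coeFn_smul (L + α)⁻¹ (restrL S hS b)] with x h1 h2 h3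
    by_contra hx
    apply h3
    rw [hz, h2, Pi.smul_apply, h1]
    simp [hx]
  have hinner : ∀ v : Lp ℝ 2 μ, (∀ᵐ x ∂μ, v x ≠ 0 → x ∈ S) →
      inner ℝ b v = (L + α) * inner ℝ z v := by
    intro v hv
    rw [← real_inner_smul_left, hzb, inner_eq, inner_eq]
    refine integral_congr_ae ?_
    filter_upwards [restrL_ae S hS b, hv] with x h1 h2
    by_cases hx : x ∈ S
    · simp [h1, hx]
    · have : v x = 0 := by
        by_contra h
        exact hx (h2 h)
      simp [this]
  have hm := hmin z hzS
  have e1 := hinner w hw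
  have e2 := hinner z hzS
  have ex : ∀ v : Lp ℝ 2 μ, inner ℝ g (v - uk) + L / 2 * ‖v - uk‖ ^ 2 + α / 2 * ‖v‖ ^ 2
      = (L + α) / 2 * ‖v‖ ^ 2 - inner ℝ b v + (L / 2 * ‖uk‖ ^ 2 - inner ℝ g uk) := by
    intro v
    rw [norm_sub_sq_real, hb, inner_sub_left, inner_sub_right, real_inner_smul_left,
      real_inner_comm uk v]
    ring
  rw [ex, ex, e1, e2, real_inner_self_eq_norm_sq] at hm
  have hn : ‖w - z‖ ^ 2 ≤ 0 := by
    rw [norm_sub_sq_real, real_inner_comm]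
    have : (L + α) * (‖w‖ ^ 2 - 2 * inner ℝ z w + ‖z‖ ^ 2) ≤ 0 := by linarith
    nlinarith
  have hwz : w = z := by
    have : ‖w - z‖ = 0 := by nlinarith [norm_nonneg (w - z)]
    exact sub_eq_zero.1 (norm_eq_zero.1 this)
  rw [hwz, hzb]

lemma restrL_sub (S : Set X) (hS : MeasurableSet S) (g h : Lp ℝ 2 μ) :
    restrL S hS (g - h) = restrL S hS g - restrL S hS h := by
  apply Lp.ext
  filter_upwards [restrL_ae S hS (g - h), restrL_ae S hS g, restrL_ae S hS h,
    Lp.coeFn_sub g h, Lp.coeFn_sub (restrL S hS g) (restrL S hS h)] with x h1 h2 h3 h4 h5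
  rw [h1, h5, Pi.sub_apply, h2, h3]
  by_cases hx : x ∈ S
  · rw [indicator_of_mem hx, indicator_of_mem hx, indicator_of_mem hx, h4, Pi.sub_apply]
  · rw [indicator_of_notMem hx, indicator_of_notMem hx, indicator_of_notMem hx, sub_zero]

lemma restrL_norm_le (S : Set X) (hS : MeasurableSet S) (g : Lp ℝ 2 μ) :
    ‖restrL S hS g‖ ≤ ‖g‖ := by
  refine Lp.norm_le_norm_of_ae_le ?_
  filter_upwards [restrL_ae S hS g] with x h1
  rw [h1]
  exact norm_indicator_le_norm_self _ _

end Helpers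

/-- Theorem `thm_strong_conv_iterates`: under Assumption (B) with `α > 0`,
`L > L_f`, and `∇f` completely continuous, if `(u_k)` are iterates of the proximal gradient
algorithm with multipliers `λ_k ≥ 0` (complementarity and support lower bound) and
`liminf λ_k > 0`, then every weakly converging subsequence `u_{k_n} ⇀ u̅` converges strongly
in `L²(Ω)`, and a.e. `u̅(x) ≠ 0` implies `u̅(x) = −(1/α) ∇f(u̅)(x)`. -/
theorem statement15 (Ω : Set (Fin d → ℝ)) (hΩ : MeasurableSet Ω)
    (h_pos : 0 < volume Ω) (h_fin : volume Ω < ⊤)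
    (τ : ℝ) (hτ : 0 < τ) (hτ' : ENNReal.ofReal τ < volume Ω)
    (f : Lp ℝ 2 (mOmega Ω) → ℝ) (gradf : Lp ℝ 2 (mOmega Ω) → Lp ℝ 2 (mOmega Ω))
    (Lf α : ℝ) (hB : AssumptionB Ω f gradf Lf α) (hα : 0 < α)
    (L : ℝ) (hL : Lf < L)
    (h_cc : ∀ (v : ℕ → Lp ℝ 2 (mOmega Ω)) (vbar : Lp ℝ 2 (mOmega Ω)),
      (∀ φ : Lp ℝ 2 (mOmega Ω),
        Tendsto (fun k => ∫ x, v k x * φ x ∂mOmega Ω) atTop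
          (𝓝 (∫ x, vbar x * φ x ∂mOmega Ω))) →
      Tendsto (fun k => ‖gradf (v k) - gradf vbar‖) atTop (𝓝 0))
    (u : ℕ → Lp ℝ 2 (mOmega Ω))
    (h_alg : ∀ k : ℕ, SolvesSub Ω f gradf α L τ (u k) (u (k + 1)))
    (lam : ℕ → ℝ) (h_lam_nonneg : ∀ k, 0 ≤ lam k)
    (h_comp : ∀ k : ℕ, lam (k + 1) * ((mOmega Ω {x | u (k + 1) x ≠ 0}).toReal - τ) = 0)
    (h_bound : ∀ k : ℕ, ∀ᵐ x ∂mOmega Ω,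
      u (k + 1) x ≠ 0 → Real.sqrt (2 * lam (k + 1) / (L + α)) ≤ |u (k + 1) x|)
    (h_liminf : ∃ c : ℝ, 0 < c ∧ ∀ᶠ k in atTop, c ≤ lam k) :
    ∀ (ubar : Lp ℝ 2 (mOmega Ω)) (kn : ℕ → ℕ), StrictMono kn →
      (∀ φ : Lp ℝ 2 (mOmega Ω),
        Tendsto (fun n => ∫ x, u (kn n) x * φ x ∂mOmega Ω) atTop
          (𝓝 (∫ x, ubar x * φ x ∂mOmega Ω))) →
      Tendsto (fun n => ‖u (kn n) - ubar‖) atTop (𝓝 0) ∧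
      (∀ᵐ x ∂mOmega Ω, ubar x ≠ 0 → ubar x = -(1 / α) * gradf ubar x) := by
  intro ubar kn hkn hweak
  by_cases hLf : Lf < 0
  · have hsub : ∀ a b : Lp ℝ 2 (mOmega Ω), a = b := by
      intro a b
      have h1 := hB.lipschitz a b
      have h2 := norm_nonneg (gradf a - gradf b)
      have h3 : ‖a - b‖ = 0 := by nlinarith [norm_nonneg (a - b)]
      exact sub_eq_zero.1 (norm_eq_zero.1 h3)
    constructor
    · refine tendsto_const_nhds.congr fun n => ?_
      rw [hsub (u (kn n)) ubar]; simp
    · rw [hsub ubar 0]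
      filter_upwards [Lp.coeFn_zero ℝ 2 (mOmega Ω)] with x hx h
      exact absurd hx h
  push Not at hLf
  have hLpos : 0 < L := lt_of_le_of_lt hLf hL
  have hLα : 0 < L + α := by linarith
  have hint : ∀ g a b : Lp ℝ 2 (mOmega Ω),
      ∫ x, g x * (a x - b x) ∂mOmega Ω = inner ℝ g (a - b) := by
    intro g a b
    rw [inner_eq]
    refine integral_congr_ae ?_
    filter_upwards [Lp.coeFn_sub a b] with x hx
    rw [hx, Pi.sub_apply]
  have hopt : ∀ k, ∀ v : Lp ℝ 2 (mOmega Ω), mOmega Ω {x | v x ≠ 0} ≤ ENNReal.ofReal τ →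
      inner ℝ (gradf (u k)) (u (k + 1) - u k) + L / 2 * ‖u (k + 1) - u k‖ ^ 2
        + α / 2 * ‖u (k + 1)‖ ^ 2 ≤
      inner ℝ (gradf (u k)) (v - u k) + L / 2 * ‖v - u k‖ ^ 2 + α / 2 * ‖v‖ ^ 2 := by
    intro k v hv
    have := (h_alg k).2 v hv
    rw [hint, hint] at this
    linarith
  -- summability of the squared steps
  have hsum1 : Summable fun k => (L - Lf) / 2 * ‖u (k + 1 + 1) - u (k + 1)‖ ^ 2 := by
    obtain ⟨c, hc⟩ := hB.bdd_below
    refine summable_of_descent (fun k => f (u (k + 1)) + α / 2 * ‖u (k + 1)‖ ^ 2) _ c ?_ ?_ ?_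
    · intro n
      have := hc (u (n + 1))
      have h2 : 0 ≤ α / 2 * ‖u (n + 1)‖ ^ 2 := by positivity
      linarith
    · intro n
      have : 0 ≤ L - Lf := by linarith
      positivity
    · intro n
      have h1 := hopt (n + 1) (u (n + 1)) (h_alg n).1
      have h2 := descent_ineq f gradf Lf hB.deriv hB.lipschitz (u (n + 1)) (u (n + 1 + 1))
      simp only [sub_self, inner_zero_right, norm_zero] at h1
      nlinarith
  have hsum2 : Summable fun k => ‖u (k + 1 + 1) - u (k + 1)‖ ^ 2 := by
    have hne : (L - Lf) / 2 ≠ 0 := by linarith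
    exact (summable_mul_left_iff hne).1 hsum1
  have hsum : Summable fun k => ‖u (k + 1) - u k‖ ^ 2 :=
    (summable_nat_add_iff (f := fun k => ‖u (k + 1) - u k‖ ^ 2) 1).1 hsum2
  have hstep : Tendsto (fun k => ‖u (k + 1) - u k‖) atTop (𝓝 0) := by
    simpa using hsum.tendsto_atTop_zero.sqrt
  -- supports
  have hSm : ∀ k, MeasurableSet {x | u k x ≠ 0} := fun k =>
    (Lp.stronglyMeasurable (u k)).measurable (measurableSet_singleton 0).compl
  set A : Set (Fin d → ℝ) := {x | ∀ᶠ k in atTop, u k x ≠ 0} with hA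
  have hAm : MeasurableSet A := by
    have : A = liminf (fun k => {x | u k x ≠ 0}) atTop := by
      ext x
      simp [hA, mem_liminf_iff_eventually_mem]
    rw [this]
    exact MeasurableSet.measurableSet_liminf hSm
  obtain ⟨c, hc, hcl⟩ := h_liminf
  have hσ : 0 < 2 * c / (L + α) := by positivity
  have hsupp : ∀ᵐ x ∂mOmega Ω, ∀ᶠ k in atTop, (x ∈ {x | u k x ≠ 0} ↔ x ∈ A) := by
    have hsubae : ∀ᵐ x ∂mOmega Ω, ∀ k, (u (k + 1) - u k : Lp ℝ 2 (mOmega Ω)) x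
        = u (k + 1) x - u k x := ae_all_iff.2 fun k => Lp.coeFn_sub _ _
    filter_upwards [ae_tendsto_of_summable _ hsum, ae_all_iff.2 h_bound, hsubae]
      with x hx hb hs
    have hlow : ∀ᶠ k in atTop, u k x ≠ 0 → 2 * c / (L + α) ≤ u k x ^ 2 := by
      filter_upwards [hcl, eventually_ge_atTop 1] with k hk hk1
      obtain ⟨m, rfl⟩ : ∃ m, k = m + 1 := ⟨k - 1, by omega⟩
      intro hne
      have h1 := hb m hne
      have h2 := (Real.sqrt_le_left (abs_nonneg _)).1 h1
      rw [sq_abs] at h2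
      refine le_trans ?_ h2
      gcongr
    have hst : ∀ᶠ k in atTop, (u (k + 1) x ≠ 0 ↔ u k x ≠ 0) := by
      filter_upwards [hlow, (tendsto_add_atTop_nat 1).eventually hlow,
        hx.eventually_lt_const hσ] with k h1 h2 h3
      rw [hs k] at h3
      constructor
      · intro h hz
        have := h2 h
        rw [hz, sub_zero] at h3
        linarith
      · intro h hz
        have := h1 h
        rw [hz, zero_sub, neg_sq] at h3
        linarith
    obtain ⟨N, hN⟩ := eventually_atTop.1 hst
    have hconst : ∀ k, N ≤ k → (u k x ≠ 0 ↔ u N x ≠ 0) := by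
      intro k hk
      induction k, hk using Nat.le_induction with
      | base => exact Iff.rfl
      | succ k hk ih => exact (hN k hk).trans ih
    filter_upwards [eventually_ge_atTop N] with k hk
    constructor
    · intro h
      refine eventually_atTop.2 ⟨N, fun j hj => ?_⟩
      exact (hconst j hj).2 ((hconst k hk).1 h)
    · intro h
      obtain ⟨j, hj, hjN⟩ := (h.and (eventually_ge_atTop N)).exists
      exact (hconst k hk).2 ((hconst j hjN).1 hj)
  -- optimality formula
  have hform : ∀ k, (L + α) • u (k + 1)
      = restrL {x | u (k + 1) x ≠ 0} (hSm (k + 1)) (L • u k - gradf (u k)) := by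
    intro k
    refine prox_formula α L hLα (gradf (u k)) (u k) (u (k + 1)) _ _
      (Eventually.of_forall fun x hx => hx) ?_
    intro v hv
    exact hopt k v ((measure_mono_ae hv).trans (h_alg k).1)
  have hself : ∀ k, restrL {x | u k x ≠ 0} (hSm k) (u k) = u k := by
    intro k
    apply Lp.ext
    filter_upwards [restrL_ae {x | u k x ≠ 0} (hSm k) (u k)] with x hx
    rw [hx]
    by_cases h : u k x = 0 <;> simp [h, indicator]
  set g := gradf ubar with hg
  set W := restrL A hAm g with hW
  have hgr : Tendsto (fun n => ‖gradf (u (kn n)) - g‖) atTop (𝓝 0) := h_cc _ _ hweak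
  -- uniform estimate
  have hest : ∀ k, ‖α • u (k + 1) + W‖ ≤ (L + Lf) * ‖u (k + 1) - u k‖
      + ‖gradf (u (k + 1)) - g‖
      + ‖restrL {x | u (k + 1) x ≠ 0} (hSm (k + 1)) g - W‖ := by
    intro k
    set R := restrL (μ := mOmega Ω) {x | u (k + 1) x ≠ 0} (hSm (k + 1)) with hR
    have hsub : ∀ a b, R (a - b) = R a - R b := fun a b => restrL_sub _ _ a b
    have hsm : R (L • u (k + 1)) = L • u (k + 1) := by
      apply Lp.ext
      filter_upwards [restrL_ae {x | u (k + 1) x ≠ 0} (hSm (k + 1)) (L • u (k + 1)),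
        Lp.coeFn_smul L (u (k + 1))] with x hx hx2
      rw [hR, hx]
      by_cases h : u (k + 1) x = 0 <;> simp [h, indicator, hx2]
    have e : α • u (k + 1) + W
        = R ((L • u k - gradf (u k)) - L • u (k + 1) - (-g)) - (R g - W) + (R (-g) + R g) := by
      have hf1 : R (L • u k - gradf (u k)) = (L + α) • u (k + 1) := (hform k).symm
      rw [hsub, hsub, hsm, hf1, add_smul]
      abel
    have e0 : R (-g) + R g = 0 := by
      have h0 : R 0 = 0 := by
        have := hsub 0 0
        simpa using this
      have := hsub 0 g
      rw [zero_sub, h0, zero_sub] at this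
      rw [this]; simp
    rw [e, e0, add_zero]
    refine (norm_sub_le _ _).trans ?_
    gcongr
    refine (restrL_norm_le _ _ _).trans ?_
    have e2 : L • u k - gradf (u k) - L • u (k + 1) - -g
        = -(L • (u (k + 1) - u k)) + (gradf (u (k + 1)) - gradf (u k))
          - (gradf (u (k + 1)) - g) := by
      rw [smul_sub]; abel
    rw [e2]
    refine (norm_sub_le _ _).trans ?_
    gcongr
    refine (norm_add_le _ _).trans ?_
    rw [norm_neg, norm_smul, Real.norm_eq_abs, abs_of_pos hLpos, add_mul]
    gcongr
    exact hB.lipschitz _ _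
  have hconv : Tendsto (fun n => ‖α • u (kn n) + W‖) atTop (𝓝 0) := by
    have t1 : Tendsto (fun n => ‖u (kn n - 1 + 1) - u (kn n - 1)‖) atTop (𝓝 0) :=
      hstep.comp ((tendsto_sub_atTop_nat 1).comp hkn.tendsto_atTop)
    have t3 := (restrL_tendsto (fun k => {x | u k x ≠ 0}) hSm A hAm g hsupp).comp
      hkn.tendsto_atTop
    have t4 := ((t1.const_mul (L + Lf)).add hgr).add t3
    simp only [mul_zero, add_zero] at t4
    refine squeeze_zero' (Eventually.of_forall fun n => norm_nonneg _) ?_ t4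
    filter_upwards [hkn.tendsto_atTop.eventually (eventually_ge_atTop 1)] with n hn
    have h1 := hest (kn n - 1)
    obtain ⟨m, hm⟩ : ∃ m, kn n = m + 1 := ⟨kn n - 1, by omega⟩
    simp only [Function.comp]
    rw [hm] at h1 ⊢
    exact h1
  set w := -(α⁻¹ • W) with hw
  have hcw : Tendsto (fun n => ‖u (kn n) - w‖) atTop (𝓝 0) := by
    have := hconv.const_mul α⁻¹
    rw [mul_zero] at this
    refine this.congr fun n => ?_
    have e : u (kn n) - w = α⁻¹ • (α • u (kn n) + W) := by
      rw [hw, smul_add, smul_smul, inv_mul_cancel₀ hα.ne', one_smul, sub_neg_eq_add]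
    rw [e, norm_smul, Real.norm_eq_abs, abs_of_pos (inv_pos.2 hα)]
  have hstrong : Tendsto (fun n => u (kn n)) atTop (𝓝 w) :=
    tendsto_iff_norm_sub_tendsto_zero.2 hcw
  have heq : ubar = w := by
    refine ext_inner_right ℝ fun φ => ?_
    have h1 : Tendsto (fun n => inner ℝ (u (kn n)) φ) atTop (𝓝 (inner ℝ w φ)) :=
      hstrong.inner tendsto_const_nhds
    have h2 := hweak φ
    simp only [← inner_eq] at h2
    exact tendsto_nhds_unique h2 h1
  refine ⟨by rw [heq]; exact hcw, ?_⟩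
  filter_upwards [restrL_ae A hAm g, Lp.coeFn_neg (α⁻¹ • W), Lp.coeFn_smul α⁻¹ W]
    with x h1 h2 h3 h4
  have h5 : ubar x = -(α⁻¹ * A.indicator g x) := by
    rw [heq, hw, h2, Pi.neg_apply, h3, Pi.smul_apply, hW, h1, smul_eq_mul]
  by_cases hx : x ∈ A
  · rw [h5, indicator_of_mem hx]
    ring
  · exfalso
    apply h4
    rw [h5, indicator_of_notMem hx]
    simp
end
end

section
/- Assume (A). Let u̅ be a solution of problem (P). Then for every measurable set B ⊆ Ω with meas(B) ≤ τ, the function ṽ is integrable on B and ∫_B ṽ(x) dx ≥ ∫_Ω (g(x,u̅(x)) − g(x,0)) dx. -/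
open MeasureTheory Set Filter Topology ENNReal NNReal

noncomputable section

variable {d : ℕ}

def clampR (a b v : ℝ) : ℝ := max a (min b v)

lemma clampR_cont (a b : ℝ) : Continuous (clampR a b) := by
  unfold clampR; fun_prop

lemma clampR_mem {a b : ℝ} (hab : a ≤ b) (v : ℝ) : clampR a b v ∈ Icc a b :=
  ⟨le_max_left _ _, max_le hab (min_le_left _ _)⟩

lemma clampR_eq {a b v : ℝ} (hv : v ∈ Icc a b) : clampR a b v = v := by
  unfold clampR; rw [min_eq_right hv.2, max_eq_right hv.1]

def mval (F : ℕ → (Fin d → ℝ) → ℝ → ℝ) (a b : ℝ) (x : Fin d → ℝ) : EReal :=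
  ⨆ n, ⨅ q : ℚ, ((F n x (clampR a b q) : ℝ) : EReal)

def Gs (F : ℕ → (Fin d → ℝ) → ℝ → ℝ) (x : Fin d → ℝ) (v : ℝ) : EReal :=
  ⨆ n, ((F n x v : ℝ) : EReal)

lemma mval_meas {F : ℕ → (Fin d → ℝ) → ℝ → ℝ} (hm : ∀ n v, Measurable fun x => F n x v)
    (a b : ℝ) : Measurable (mval F a b) := by
  unfold mval
  refine Measurable.iSup fun n => Measurable.iInf fun q => ?_
  exact (hm n _).coe_real_ereal

lemma mval_le {F : ℕ → (Fin d → ℝ) → ℝ → ℝ} (hc : ∀ n x, Continuous (F n x))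
    {a b v : ℝ} (hv : v ∈ Icc a b) (x : Fin d → ℝ) : mval F a b x ≤ Gs F x v := by
  refine iSup_mono fun n => ?_
  have h : ∀ w : ℝ, (⨅ q : ℚ, ((F n x (clampR a b q) : ℝ) : EReal))
      ≤ ((F n x (clampR a b w) : ℝ) : EReal) := by
    intro w
    have hcl : IsClosed {w : ℝ | (⨅ q : ℚ, ((F n x (clampR a b q) : ℝ) : EReal))
      ≤ ((F n x (clampR a b w) : ℝ) : EReal)} :=
      isClosed_le continuous_const
        (continuous_coe_real_ereal.comp ((hc n x).comp (clampR_cont a b)))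
    exact Rat.denseRange_cast.induction_on (p := fun w : ℝ =>
      (⨅ q : ℚ, ((F n x (clampR a b q) : ℝ) : EReal))
      ≤ ((F n x (clampR a b w) : ℝ) : EReal)) w hcl (fun q => iInf_le _ q)
  simpa [clampR_eq hv] using h v

lemma mval_attained {F : ℕ → (Fin d → ℝ) → ℝ → ℝ} (hc : ∀ n x, Continuous (F n x))
    (hmono : ∀ n x v, F n x v ≤ F (n+1) x v)
    {a b : ℝ} (hab : a ≤ b) (x : Fin d → ℝ) : ∃ v ∈ Icc a b, Gs F x v ≤ mval F a b x := by
  have hcl : ∀ n, IsClosed (Icc a b ∩ {v | ((F n x v : ℝ) : EReal) ≤ mval F a b x}) := fun n =>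
    isClosed_Icc.inter (isClosed_le (continuous_coe_real_ereal.comp (hc n x)) continuous_const)
  obtain ⟨v, hv⟩ := IsCompact.nonempty_iInter_of_sequence_nonempty_isCompact_isClosed
    (fun n => Icc a b ∩ {v | ((F n x v : ℝ) : EReal) ≤ mval F a b x})
    (fun n v hv => ⟨hv.1, le_trans (EReal.coe_le_coe_iff.2 (hmono n x v)) (show _ ≤ _ from hv.2)⟩)
    (fun n => by
      obtain ⟨v, hv, hmin⟩ := isCompact_Icc.exists_isMinOn (nonempty_Icc.2 hab)
        (hc n x).continuousOn
      refine ⟨v, hv, ?_⟩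
      refine le_trans (le_iInf fun q : ℚ => ?_)
        (le_iSup (fun n => ⨅ q : ℚ, ((F n x (clampR a b q) : ℝ) : EReal)) n)
      exact_mod_cast hmin (clampR_mem hab q))
    (isCompact_Icc.of_isClosed_subset (hcl 0) inter_subset_left) hcl
  rw [mem_iInter] at hv
  exact ⟨v, (hv 0).1, iSup_le fun n => (hv n).2⟩

/-- measurable selection of minimizers on `[a,b]` -/
lemma exists_sel {F : ℕ → (Fin d → ℝ) → ℝ → ℝ} (hm : ∀ n v, Measurable fun x => F n x v)
    (hc : ∀ n x, Continuous (F n x)) (hmono : ∀ n x v, F n x v ≤ F (n+1) x v)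
    {a b : ℝ} (hab : a ≤ b) :
    ∃ u : (Fin d → ℝ) → ℝ, Measurable u ∧ ∀ x, Gs F x (u x) = mval F a b x := by
  let T : (Fin d → ℝ) → Set ℝ := fun x => Icc a b ∩ {v | Gs F x v ≤ mval F a b x}
  have hTcl : ∀ x, IsClosed (T x) := by
    intro x
    have : {v | Gs F x v ≤ mval F a b x} = ⋂ n, {v | ((F n x v : ℝ) : EReal) ≤ mval F a b x} := by
      ext v; simp [Gs]
    refine isClosed_Icc.inter ?_
    rw [this]
    exact isClosed_iInter fun n =>
      isClosed_le (continuous_coe_real_ereal.comp (hc n x)) continuous_const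
  have hTne : ∀ x, (T x).Nonempty := fun x => by
    obtain ⟨v, hv, h⟩ := mval_attained hc hmono hab x
    exact ⟨v, hv, h⟩
  have hTbd : ∀ x, BddBelow (T x) := fun x => ⟨a, fun v hv => hv.1.1⟩
  have hmem : ∀ x, sInf (T x) ∈ T x := fun x => (hTcl x).csInf_mem (hTne x) (hTbd x)
  refine ⟨fun x => sInf (T x), ?_, fun x => le_antisymm (hmem x).2 (mval_le hc (hmem x).1 x)⟩
  refine measurable_of_Iic fun c => ?_
  by_cases hca : a ≤ c
  · have : (fun x => sInf (T x)) ⁻¹' Iic c = {x | mval F a (min c b) x ≤ mval F a b x} := by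
      ext x
      simp only [mem_preimage, mem_Iic, mem_ofPred_eq]
      constructor
      · intro h
        exact le_trans (mval_le hc ⟨(hmem x).1.1, le_min h (hmem x).1.2⟩ x) (hmem x).2
      · intro h
        obtain ⟨v, hv, hv2⟩ := mval_attained hc hmono (le_min hca hab) x
        exact le_trans (csInf_le (hTbd x)
          ⟨⟨hv.1, hv.2.trans (min_le_right _ _)⟩, hv2.trans h⟩) (hv.2.trans (min_le_left _ _))
    rw [this]
    exact measurableSet_le (mval_meas hm _ _) (mval_meas hm _ _)
  · have : (fun x => sInf (T x)) ⁻¹' Iic c = ∅ := by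
      ext x
      simp only [mem_preimage, mem_Iic, mem_empty_iff_false, iff_false]
      intro h
      exact hca ((hmem x).1.1.trans h)
    rw [this]; exact MeasurableSet.empty

lemma exists_clean {μ : Measure (Fin d → ℝ)} {g : (Fin d → ℝ) → ℝ → EReal}
    (hg : NormalIntegrand μ g) (h0 : ∀ᵐ x ∂μ, g x 0 ≠ ⊤ ∧ g x 0 ≠ ⊥) :
    ∃ F : ℕ → (Fin d → ℝ) → ℝ → ℝ, (∀ n v, Measurable fun x => F n x v) ∧
      (∀ n x, Continuous (F n x)) ∧ (∀ n x v, F n x v ≤ F (n+1) x v) ∧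
      (∀ x, Gs F x 0 ≠ ⊤) ∧ ∀ᵐ x ∂μ, ∀ v, g x v = Gs F x v := by
  classical
  obtain ⟨gn, hcar, hsup⟩ := hg
  have hall : ∀ᵐ x ∂μ, (∀ n, Continuous (gn n x)) ∧
      (∀ u : ℝ, g x u = ⨆ n, ((gn n x u : ℝ) : EReal)) ∧ g x 0 ≠ ⊤ := by
    filter_upwards [ae_all_iff.2 fun n => (hcar n).2, hsup, h0] with x h1 h2 h3
    exact ⟨h1, h2, h3.1⟩
  obtain ⟨S, hS, hSm, hSP⟩ := hall.exists_measurable_mem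
  let P : ℕ → (Fin d → ℝ) → ℝ → ℝ := fun n x v => partialSups (fun k => gn k x v) n
  have hP0 : ∀ x v, P 0 x v = gn 0 x v := fun x v => by simp [P]
  have hPs : ∀ n x v, P (n+1) x v = max (P n x v) (gn (n+1) x v) := fun n x v => by
    simp [P, partialSups_add_one]
  have hPm : ∀ n v, Measurable fun x => P n x v := by
    intro n v
    induction n with
    | zero => simp only [hP0]; exact (hcar 0).1 v
    | succ n ih => simp only [hPs]; exact ih.max ((hcar (n+1)).1 v)
  have hPc : ∀ n x, x ∈ S → Continuous (P n x) := by
    intro n x hx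
    induction n with
    | zero => exact ((hSP x hx).1 0).congr fun v => (hP0 x v).symm
    | succ n ih => exact (ih.max ((hSP x hx).1 (n+1))).congr fun v => (hPs n x v).symm
  have hPe : ∀ n x v, ∃ k, P n x v = gn k x v := by
    intro n x v
    induction n with
    | zero => exact ⟨0, hP0 x v⟩
    | succ n ih =>
      rw [hPs]
      rcases max_choice (P n x v) (gn (n+1) x v) with h | h
      · rw [h]; exact ih
      · rw [h]; exact ⟨_, rfl⟩
  have hle : ∀ n x v, gn n x v ≤ P n x v := fun n x v => le_partialSups (fun k => gn k x v) n
  have hG : ∀ x ∈ S, ∀ v, g x v = Gs (fun n x v => if x ∈ S then P n x v else 0) x v := by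
    intro x hx v
    rw [(hSP x hx).2.1 v]
    simp only [Gs, if_pos hx]
    refine le_antisymm (iSup_mono fun n => by exact_mod_cast hle n x v) (iSup_le fun n => ?_)
    obtain ⟨k, hk⟩ := hPe n x v
    rw [hk]
    exact le_iSup (fun n => ((gn n x v : ℝ) : EReal)) k
  refine ⟨fun n x v => if x ∈ S then P n x v else 0, ?_, ?_, ?_, ?_, ?_⟩
  · intro n v
    exact Measurable.ite hSm (hPm n v) measurable_const
  · intro n x
    by_cases hx : x ∈ S
    · simpa [hx] using hPc n x hx
    · simpa [hx] using continuous_const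
  · intro n x v
    by_cases hx : x ∈ S
    · simp [hx, hPs]
    · simp [hx]
  · intro x
    by_cases hx : x ∈ S
    · rw [← hG x hx]; exact (hSP x hx).2.2
    · simp [Gs, hx]
  · filter_upwards [hS] with x hx using hG x hx

lemma tildeV_calc {F : ℕ → (Fin d → ℝ) → ℝ → ℝ} (hc : ∀ n x, Continuous (F n x))
    {g : (Fin d → ℝ) → ℝ → EReal} {x : Fin d → ℝ} (hgx : ∀ v, g x v = Gs F x v)
    {g0 : ℝ} {p : ℕ → ℝ} (h0 : Gs F x 0 = g0) (hp : ∀ N : ℕ, mval F (-N) N x = p N)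
    (hatt : ∀ N : ℕ, ∃ v, Gs F x v = mval F (-N) N x)
    (hfin : (⨆ N, ENNReal.ofReal (g0 - p N)) ≠ ⊤) :
    tildeV g x = ((-(⨆ N, ENNReal.ofReal (g0 - p N)).toReal : ℝ) : EReal) := by
  set K := (⨆ N, ENNReal.ofReal (g0 - p N)).toReal with hK
  have hKN : ∀ N, g0 - p N ≤ K := fun N => by
    have := ENNReal.toReal_mono hfin (le_iSup (fun N => ENNReal.ofReal (g0 - p N)) N)
    exact (le_max_left _ _).trans ((ENNReal.toReal_ofReal' (r := g0 - p N)) ▸ this)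
  have hp0 : ∀ N, p N ≤ g0 := fun N => by
    have := mval_le (F := F) hc (a := -(N:ℝ)) (b := N) (v := 0) ⟨by simp, by simp⟩ x
    rw [hp, h0] at this
    exact_mod_cast this
  have key : (⨅ v, g x v) = ((g0 - K : ℝ) : EReal) := by
    apply le_antisymm
    · by_contra hlt
      push Not at hlt
      obtain ⟨r, hr1, hr2⟩ := EReal.lt_iff_exists_real_btwn.1 hlt
      have hr1' : g0 - K < r := by exact_mod_cast hr1
      have hrp : ∀ N, r < p N := fun N => by
        obtain ⟨v, hv⟩ := hatt N
        have : (r : EReal) < p N := by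
          rw [← hp, ← hv, ← hgx]; exact hr2.trans_le (iInf_le _ v)
        exact_mod_cast this
      have h1 : (⨆ N, ENNReal.ofReal (g0 - p N)) ≤ ENNReal.ofReal (g0 - r) :=
        iSup_le fun N => ENNReal.ofReal_le_ofReal (by linarith [hrp N])
      have h2 := ENNReal.toReal_mono ENNReal.ofReal_ne_top h1
      rw [ENNReal.toReal_ofReal (by linarith [hrp 0, hp0 0])] at h2
      linarith
    · refine le_iInf fun v => ?_
      obtain ⟨N, hN⟩ := exists_nat_ge |v|
      rw [hgx]
      refine le_trans ?_ (mval_le (F := F) hc (abs_le.1 hN) x)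
      rw [hp]
      exact_mod_cast (by linarith [hKN N] : g0 - K ≤ p N)
  rw [tildeV, key, hgx, h0, ← EReal.coe_sub]
  congr 1; ring

/-- under Assumption (A), if `u̅` solves (P), then for every measurable
`B ⊆ Ω` with `meas B ≤ τ`, the function `ṽ` is integrable on `B` and
`∫_B ṽ dx ≥ ∫_Ω (g(x,u̅(x)) − g(x,0)) dx`. -/
theorem statement17 (Ω : Set (Fin d → ℝ)) (g : (Fin d → ℝ) → ℝ → EReal) (τ : ℝ)
    (hA : AssumptionA Ω g τ)
    (ubar : (Fin d → ℝ) → ℝ) (h_sol : SolvesP Ω g τ ubar) :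
    ∀ B : Set (Fin d → ℝ), MeasurableSet B → B ⊆ Ω → volume B ≤ ENNReal.ofReal τ →
      IntegrableE ((mOmega Ω).restrict B) (tildeV g) ∧
      intE (mOmega Ω) (fun x => g x (ubar x)) - intE (mOmega Ω) (fun x => g x 0) ≤
        intE ((mOmega Ω).restrict B) (tildeV g) := by
  intro B hBm hBΩ hBτ
  obtain ⟨F, hm, hc, hmono, h0top, hae⟩ := exists_clean hA.normal hA.int_g0.1
  set μ := mOmega Ω with hμ
  have h0bot : ∀ x v, Gs F x v ≠ ⊥ := fun x v h => by
    have : ((F 0 x v : ℝ) : EReal) ≤ Gs F x v := le_iSup (fun n => ((F n x v : ℝ) : EReal)) 0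
    rw [h] at this
    exact EReal.coe_ne_bot _ (le_bot_iff.1 this)
  have hN : ∀ N : ℕ, (-(N:ℝ)) ≤ N := fun N => by
    have : (0:ℝ) ≤ N := Nat.cast_nonneg N
    linarith
  have hsel : ∀ N : ℕ, ∃ u : (Fin d → ℝ) → ℝ, Measurable u ∧
      ∀ x, Gs F x (u x) = mval F (-N) N x := fun N => exists_sel hm hc hmono (hN N)
  choose u hum hu using hsel
  let g0 : (Fin d → ℝ) → ℝ := fun x => (Gs F x 0).toReal
  let p : ℕ → (Fin d → ℝ) → ℝ := fun N x => (mval F (-N) N x).toReal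
  have hg0 : ∀ x, Gs F x 0 = g0 x := fun x => (EReal.coe_toReal (h0top x) (h0bot x 0)).symm
  have hml : ∀ (N : ℕ) x, mval F (-N) N x ≤ Gs F x 0 := fun N x =>
    mval_le hc ⟨by simp, by simp⟩ x
  have hp : ∀ (N : ℕ) x, mval F (-N) N x = p N x := fun N x =>
    (EReal.coe_toReal (ne_top_of_le_ne_top (h0top x) (hml N x)) (hu N x ▸ h0bot x _)).symm
  have hple : ∀ N x, p N x ≤ g0 x := fun N x => by
    have := hml N x
    rw [hp, hg0] at this
    exact_mod_cast this
  have hg0m : Measurable g0 :=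
    (Measurable.iSup fun n => (hm n 0).coe_real_ereal).ereal_toReal
  have hpm : ∀ N, Measurable (p N) := fun N => (mval_meas hm _ _).ereal_toReal
  have hpanti : ∀ x, Antitone fun N => p N x := fun x N M hNM => by
    obtain ⟨v, hv, hv2⟩ := mval_attained hc hmono (hN N) x
    have hNM' : (N:ℝ) ≤ M := by exact_mod_cast hNM
    have := (mval_le hc (a := -(M:ℝ)) (b := M) (v := v)
      ⟨by linarith [hv.1], by linarith [hv.2]⟩ x).trans hv2
    rw [hp, hp] at this
    exact_mod_cast this
  have hg0i : Integrable g0 μ := by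
    refine hA.int_g0.2.congr ?_
    filter_upwards [hae] with x hx
    simp [g0, hx]
  have hg0int : intE μ (fun x => g x 0) = ∫ x, g0 x ∂μ := by
    refine integral_congr_ae ?_
    filter_upwards [hae] with x hx
    simp [g0, hx]
  have hμB : μ B ≠ ⊤ :=
    ne_top_of_le_ne_top ENNReal.ofReal_ne_top ((Measure.restrict_apply_le Ω B).trans hBτ)
  set C := intE μ (fun x => g x 0) - intE μ (fun x => g x (ubar x)) with hC
  let E : ℕ → ℕ → Set (Fin d → ℝ) := fun N k => B ∩ {x | g0 x - p N x ≤ k}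
  have hEm : ∀ N k, MeasurableSet (E N k) := fun N k =>
    hBm.inter (measurableSet_le (hg0m.sub (hpm N)) measurable_const)
  have step : ∀ N k, IntegrableOn (fun x => g0 x - p N x) (E N k) μ ∧
      ∫ x in E N k, (g0 x - p N x) ∂μ ≤ C := by
    intro N k
    have hfin : μ (E N k) ≠ ⊤ := ne_top_of_le_ne_top hμB (measure_mono inter_subset_left)
    have hi : IntegrableOn (fun x => g0 x - p N x) (E N k) μ := by
      refine Measure.integrableOn_of_bounded (M := k) hfin
        (hg0m.sub (hpm N)).aestronglyMeasurable ?_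
      refine (ae_restrict_mem (hEm N k)).mono fun x hx => ?_
      rw [Real.norm_of_nonneg (by linarith [hple N x])]
      exact hx.2
    refine ⟨hi, ?_⟩
    have hi' : Integrable ((E N k).indicator fun x => g0 x - p N x) μ :=
      (integrable_indicator_iff (hEm N k)).2 hi
    have hpt : ∀ᵐ x ∂μ, g x ((E N k).indicator (u N) x) =
        ((g0 x - (E N k).indicator (fun x => g0 x - p N x) x : ℝ) : EReal) := by
      filter_upwards [hae] with x hx
      by_cases hxE : x ∈ E N k
      · rw [indicator_of_mem hxE, indicator_of_mem hxE, hx, hu, hp]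
        congr 1; ring
      · rw [indicator_of_notMem hxE, indicator_of_notMem hxE, hx, hg0, sub_zero]
    have hpt' : (fun x => (g x ((E N k).indicator (u N) x)).toReal) =ᵐ[μ]
        fun x => g0 x - (E N k).indicator (fun x => g0 x - p N x) x := by
      filter_upwards [hpt] with x hx
      rw [hx, EReal.toReal_coe]
    have hfeas : FeasibleP Ω g τ ((E N k).indicator (u N)) := by
      refine ⟨(hum N).indicator (hEm N k), ⟨?_, ?_⟩, ?_⟩
      · filter_upwards [hpt] with x hx
        rw [hx]
        exact ⟨EReal.coe_ne_top _, EReal.coe_ne_bot _⟩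
      · exact (hg0i.sub hi').congr hpt'.symm
      · refine (measure_mono fun x hx => ?_).trans hBτ
        exact (mem_of_indicator_ne_zero hx.2).1
    have hopt := h_sol.2 _ hfeas
    have : intE μ (fun x => g x ((E N k).indicator (u N) x)) =
        ∫ x, g0 x ∂μ - ∫ x in E N k, (g0 x - p N x) ∂μ := by
      rw [intE, integral_congr_ae hpt', integral_sub hg0i hi', integral_indicator (hEm N k)]
    rw [← hμ, this] at hopt
    rw [hC, hg0int]
    linarith
  have hC0 : 0 ≤ C := le_trans
    (integral_nonneg fun x => by simpa using hple 0 x) (step 0 0).2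
  have step2 : ∀ N, ∫⁻ x in B, ENNReal.ofReal (g0 x - p N x) ∂μ ≤ ENNReal.ofReal C := by
    intro N
    have hU : B = ⋃ k, E N k := by
      ext x
      simp only [E, mem_iUnion, mem_inter_iff, mem_ofPred_eq, exists_and_left]
      exact ⟨fun h => ⟨h, exists_nat_ge _⟩, fun h => h.1⟩
    rw [hU, setLIntegral_iUnion_of_directed]
    · refine iSup_le fun k => ?_
      rw [← ofReal_integral_eq_lintegral_ofReal (step N k).1
        (Eventually.of_forall fun x => by simpa using hple N x)]
      exact ENNReal.ofReal_le_ofReal (step N k).2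
    · refine (monotone_nat_of_le_succ fun k x hx => ⟨hx.1, ?_⟩ : Monotone (E N)).directed_le
      have h2 : g0 x - p N x ≤ k := hx.2
      show g0 x - p N x ≤ ((k+1 : ℕ) : ℝ)
      push_cast; linarith
  have hWm : ∀ N, Measurable fun x => ENNReal.ofReal (g0 x - p N x) := fun N =>
    (hg0m.sub (hpm N)).ennreal_ofReal
  have step3 : ∫⁻ x in B, (⨆ N, ENNReal.ofReal (g0 x - p N x)) ∂μ ≤ ENNReal.ofReal C := by
    rw [lintegral_iSup hWm fun N M hNM x =>
      ENNReal.ofReal_le_ofReal (by have := hpanti x hNM; simp only at this; linarith)]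
    exact iSup_le step2
  have hWM : Measurable fun x => ⨆ N, ENNReal.ofReal (g0 x - p N x) := Measurable.iSup hWm
  have hne := ne_top_of_le_ne_top ENNReal.ofReal_ne_top step3
  have hlt := ae_lt_top hWM hne
  have htv : ∀ᵐ x ∂μ.restrict B, tildeV g x =
      ((-(⨆ N, ENNReal.ofReal (g0 x - p N x)).toReal : ℝ) : EReal) := by
    filter_upwards [hlt, ae_restrict_of_ae hae] with x hx hx2
    exact tildeV_calc hc hx2 (hg0 x) (fun N => hp N x) (fun N => ⟨_, hu N x⟩) hx.ne
  have htv' : (fun x => (tildeV g x).toReal) =ᵐ[μ.restrict B]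
      fun x => -(⨆ N, ENNReal.ofReal (g0 x - p N x)).toReal := by
    filter_upwards [htv] with x hx
    rw [hx, EReal.toReal_coe]
  refine ⟨⟨?_, ?_⟩, ?_⟩
  · filter_upwards [htv] with x hx
    rw [hx]
    exact ⟨EReal.coe_ne_top _, EReal.coe_ne_bot _⟩
  · exact (integrable_toReal_of_lintegral_ne_top hWM.aemeasurable hne).neg.congr htv'.symm
  · have h1 : intE (μ.restrict B) (tildeV g) =
        -(∫⁻ x in B, (⨆ N, ENNReal.ofReal (g0 x - p N x)) ∂μ).toReal := by
      rw [intE, integral_congr_ae htv', integral_neg, integral_toReal hWM.aemeasurable hlt]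
    have h2 := ENNReal.toReal_mono ENNReal.ofReal_ne_top step3
    rw [ENNReal.toReal_ofReal hC0] at h2
    rw [h1]
    linarith
end
end
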